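/- arXiv:2601.19848 — 7 statements merged into one kernel-verified Lean document; each statement's English description precedes it below -/
import Mathlib

section
/- Suppose k ≥ 1 and d ≥ 2, and suppose there exists a stabilizer group G ⊆ P_n with parameters [[n,k,d;3]] (i.e., dim G = n − k, d(G) = d, and W(G) = 3). Then d = 2 and 4k ≤ n (the code rate satisfies k/n ≤ 1/4). -/
open scoped Classical

noncomputable section

/-- Pauli strings modulo phase, indexed by a finite type. -/
abbrev PauliT (ι : Type) : Type := ι → ZMod 2 × ZMod 2

abbrev Pauli (n : ℕ) : Type := PauliT (Fin n)

variable {ι : Type} [Fintype ι]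

/-- Weight of a Pauli string. -/
def wt (v : PauliT ι) : ℕ := (Finset.univ.filter fun i => v i ≠ 0).card

/-- Support of a Pauli string. -/
def suppF (v : PauliT ι) : Finset ι := Finset.univ.filter fun i => v i ≠ 0

/-- Symplectic form encoding commutation. -/
def sympl (u v : PauliT ι) : ZMod 2 :=
  ∑ i, ((u i).1 * (v i).2 + (u i).2 * (v i).1)

/-- `G` is a stabilizer group (isotropic subspace). -/
def IsStabilizer (G : Submodule (ZMod 2) (PauliT ι)) : Prop :=
  ∀ u ∈ G, ∀ v ∈ G, sympl u v = 0

/-- Membership in the symplectic dual `G^⊥`. -/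
def inDual (G : Submodule (ZMod 2) (PauliT ι)) (v : PauliT ι) : Prop :=
  ∀ g ∈ G, sympl v g = 0

/-- Distance: minimum weight of an element of `G^⊥ \ G`, `⊤` if none exists. -/
def distG (G : Submodule (ZMod 2) (PauliT ι)) : ℕ∞ :=
  sInf ((fun v => (wt v : ℕ∞)) '' {v | inDual G v ∧ v ∉ G})

/-- `g` is an `𝔽₂`-basis (indexed family) of `G`. -/
def IsBasisFam {r : ℕ} (G : Submodule (ZMod 2) (PauliT ι)) (g : Fin r → PauliT ι) : Prop :=
  LinearIndependent (ZMod 2) g ∧ Submodule.span (ZMod 2) (Set.range g) = G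

/-- The weight of a stabilizer group: optimal maximum generator weight over bases. -/
def Wgt (G : Submodule (ZMod 2) (PauliT ι)) : ℕ∞ :=
  ⨅ (r : ℕ) (g : Fin r → PauliT ι) (_ : IsBasisFam G g),
    Finset.univ.sup fun i => (wt (g i) : ℕ∞)

/-- Optimal weight over all `[[n,k,d]]` stabilizer codes. -/
def Wopt (n k : ℕ) (d : ℕ∞) : ℕ∞ :=
  ⨅ (G : Submodule (ZMod 2) (Pauli n))
    (_ : IsStabilizer G ∧ Module.finrank (ZMod 2) ↥G = n - k ∧ distG G = d),
    Wgt G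

/-- Weight enumerator: number of elements of `G` of weight `j`. -/
def Aj (G : Submodule (ZMod 2) (PauliT ι)) (j : ℕ) : ℕ :=
  Nat.card {g : PauliT ι // g ∈ G ∧ wt g = j}

/-- A weight-optimal generating set. -/
def IsWeightOptimalBasis {r : ℕ} (G : Submodule (ZMod 2) (PauliT ι))
    (g : Fin r → PauliT ι) : Prop :=
  IsBasisFam G g ∧ Monotone (fun i => wt (g i)) ∧
    ∀ h : Fin r → PauliT ι, IsBasisFam G h → Monotone (fun i => wt (h i)) →
      ∀ i, wt (g i) ≤ wt (h i)

/-- Set of average generator weights over all bases of `G`. -/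
def WavgSet (G : Submodule (ZMod 2) (PauliT ι)) : Set ℚ :=
  {x | ∃ (r : ℕ) (g : Fin r → PauliT ι), IsBasisFam G g ∧
        x = (∑ i, (wt (g i) : ℚ)) / (r : ℚ)}

/-- Splitting of Pauli strings along a bipartition given by a predicate. -/
def splitEquiv (p : ι → Prop) :
    PauliT ι ≃ₗ[ZMod 2] PauliT {x // p x} × PauliT {x // ¬ p x} :=
  (LinearEquiv.funCongrLeft (ZMod 2) (ZMod 2 × ZMod 2) (Equiv.sumCompl p)).trans
    (LinearEquiv.sumArrowLequivProdArrow _ _ _ _)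

/-- Tensor product of subspaces along a bipartition. -/
def tensorAlong (p : ι → Prop)
    (GA : Submodule (ZMod 2) (PauliT {x // p x}))
    (GB : Submodule (ZMod 2) (PauliT {x // ¬ p x})) :
    Submodule (ZMod 2) (PauliT ι) :=
  (GA.prod GB).comap (splitEquiv p).toLinearMap

/-- Decomposability as a tensor product over a nontrivial bipartition. -/
def Decomposable (G : Submodule (ZMod 2) (PauliT ι)) : Prop :=
  ∃ p : ι → Prop, (∃ x, p x) ∧ (∃ x, ¬ p x) ∧
    ∃ (GA : Submodule (ZMod 2) (PauliT {x // p x}))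
      (GB : Submodule (ZMod 2) (PauliT {x // ¬ p x})),
      G = tensorAlong p GA GB

/-- Identification of `Pauli (n₁+n₂)` with `Pauli n₁ × Pauli n₂`. -/
def pauliSumEquiv (n₁ n₂ : ℕ) :
    Pauli (n₁ + n₂) ≃ₗ[ZMod 2] Pauli n₁ × Pauli n₂ :=
  (LinearEquiv.funCongrLeft (ZMod 2) (ZMod 2 × ZMod 2) finSumFinEquiv).trans
    (LinearEquiv.sumArrowLequivProdArrow _ _ _ _)

/-- Tensor product of stabilizer subspaces on `n₁` and `n₂` qubits. -/
def tensorFin {n₁ n₂ : ℕ} (G₁ : Submodule (ZMod 2) (Pauli n₁))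
    (G₂ : Submodule (ZMod 2) (Pauli n₂)) :
    Submodule (ZMod 2) (Pauli (n₁ + n₂)) :=
  (G₁.prod G₂).comap (pauliSumEquiv n₁ n₂).toLinearMap


/-! ### Local form -/

def loc (a b : ZMod 2 × ZMod 2) : ZMod 2 := a.1 * b.2 + a.2 * b.1

theorem sympl_eq_loc (u v : PauliT ι) : sympl u v = ∑ i, loc (u i) (v i) := rfl

theorem mem_suppF (v : PauliT ι) (i : ι) : i ∈ suppF v ↔ v i ≠ 0 := by
  simp [suppF]

theorem wt_eq (v : PauliT ι) : wt v = (suppF v).card := rfl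

theorem loc_self : ∀ a, loc a a = 0 := by decide
theorem loc_zero_left : ∀ a, loc 0 a = 0 := by decide
theorem loc_zero_right : ∀ a, loc a 0 = 0 := by decide
theorem loc_comm : ∀ a b, loc a b = loc b a := by decide
theorem loc_ne_left : ∀ a b, loc a b ≠ 0 → a ≠ 0 := by decide
theorem loc_ne_right : ∀ a b, loc a b ≠ 0 → b ≠ 0 := by decide
theorem loc_eq_of : ∀ a b, a ≠ 0 → b ≠ 0 → loc a b = 0 → a = b := by decide
theorem loc_detect : ∀ a b c, loc a b ≠ 0 → c ≠ 0 → loc c a ≠ 0 ∨ loc c b ≠ 0 := by decide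
theorem loc_solve : ∀ a b x y, loc a b ≠ 0 → ∃ p, loc p a = x ∧ loc p b = y := by decide
theorem z2_add : ∀ a b : ZMod 2, a ≠ 0 → b ≠ 0 → a + b = 0 := by decide
theorem z2_three : ∀ a b c : ZMod 2, a ≠ 0 → b ≠ 0 → a + b + c = 0 → c = 0 := by decide
theorem z2_two : ∀ a b : ZMod 2, a ≠ 0 → b + a = 0 → b ≠ 0 := by decide
theorem z2_one : ∀ a : ZMod 2, a ≠ 0 → a = 1 := by decide
theorem loc_third : ∀ a b x, loc a b ≠ 0 → loc x a ≠ 0 → loc x b ≠ 0 → x = a + b := by decide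

structure Good {n r : ℕ} (g : Fin r → Pauli n) : Prop where
  le3 : ∀ s, wt (g s) ≤ 3
  comm : ∀ s t, ∑ i, loc (g s i) (g t i) = 0
  min : ∀ (c : Fin r → ZMod 2) s, c s ≠ 0 → wt (g s) ≤ wt (∑ t, c t • g t)
  d2 : ∀ x : Pauli n, (∀ s, ∑ i, loc (x i) (g s i) = 0) → wt x ≤ 1 →
    ∃ c : Fin r → ZMod 2, x = ∑ t, c t • g t

/-- distance at least three. -/
def Good3 {n r : ℕ} (g : Fin r → Pauli n) : Prop :=
  ∀ x : Pauli n, (∀ s, ∑ i, loc (x i) (g s i) = 0) → wt x ≤ 2 →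
    ∃ c : Fin r → ZMod 2, x = ∑ t, c t • g t

def isT {n r : ℕ} (g : Fin r → Pauli n) (i : Fin n) : Prop := ∃ s, suppF (g s) = {i}

def Gi {n r : ℕ} (g : Fin r → Pauli n) (i : Fin n) : Finset (Fin r) :=
  Finset.univ.filter fun s => g s i ≠ 0

section comb

variable {n r : ℕ} {g : Fin r → Pauli n}

theorem mem_Gi (i : Fin n) (s : Fin r) : s ∈ Gi g i ↔ g s i ≠ 0 := by simp [Gi]

theorem exists_of_sum_ne (c : Fin r → ZMod 2) (i : Fin n) (h : (∑ t, c t • g t) i ≠ 0) :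
    ∃ s, c s ≠ 0 ∧ g s i ≠ 0 := by
  rw [Finset.sum_apply] at h
  obtain ⟨s, -, hs⟩ := Finset.exists_ne_zero_of_sum_ne_zero h
  refine ⟨s, ?_, ?_⟩
  · rintro h0; simp [h0] at hs
  · rintro h0; simp [h0] at hs

theorem Good.full (H : Good g) {i : Fin n} (hi : ¬ isT g i) (p : ZMod 2 × ZMod 2) (hp : p ≠ 0) :
    ∃ s, loc p (g s i) ≠ 0 := by
  by_contra! hcon
  have hs : suppF (Pi.single i p : Pauli n) = {i} := by
    ext l; rw [mem_suppF]
    by_cases h : l = i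
    · subst h; simp [hp]
    · simp [h]
  obtain ⟨c, hc⟩ := H.d2 (Pi.single i p) (by
    intro s
    rw [Finset.sum_eq_single i]
    · simpa using hcon s
    · intro b _ hb; simp [hb, loc_zero_left]
    · simp) (by rw [wt_eq, hs]; simp)
  have h1 : (∑ t, c t • g t) i ≠ 0 := by rw [← hc]; simpa using hp
  obtain ⟨s, hcs, hgs⟩ := exists_of_sum_ne c i h1
  have h2 := H.min c s hcs
  rw [← hc, wt_eq, wt_eq, hs, Finset.card_singleton] at h2
  apply hi
  refine ⟨s, ?_⟩
  rw [Finset.card_le_one] at h2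
  ext l
  simp only [Finset.mem_singleton]
  constructor
  · intro hl; exact h2 _ hl _ ((mem_suppF _ _).2 hgs)
  · rintro rfl; exact (mem_suppF _ _).2 hgs

theorem Good.T_unique (H : Good g) {j : Fin n} {t : Fin r} (ht : suppF (g t) = {j}) (s : Fin r)
    (hs : g s j ≠ 0) : s = t := by
  by_contra hne
  have htj : g t j ≠ 0 := by rw [← mem_suppF, ht]; simp
  have ht0 : ∀ l, l ≠ j → g t l = 0 := by
    intro l hl; by_contra h; rw [← ne_eq, ← mem_suppF, ht] at h; simp at h; exact hl h
  have h1 := H.comm s t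
  rw [Finset.sum_eq_single j (by intro b _ hb; rw [ht0 b hb, loc_zero_right]) (by simp)] at h1
  have h2 := loc_eq_of _ _ hs htj h1
  have h3 := H.min (Pi.single s 1 + Pi.single t 1) s (by simp [hne])
  have h4 : ∑ x, (Pi.single s 1 + Pi.single t 1 : Fin r → ZMod 2) x • g x = g s + g t := by
    simp [add_smul, Finset.sum_add_distrib, Pi.single_apply]
  rw [h4, wt_eq, wt_eq] at h3
  have h5 : suppF (g s + g t) ⊆ (suppF (g s)).erase j := by
    intro l hl
    rw [mem_suppF] at hl
    rw [Finset.mem_erase, mem_suppF]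
    by_cases hlj : l = j
    · subst hlj
      exfalso; apply hl
      rw [Pi.add_apply, h2]; exact CharTwo.add_self_eq_zero _
    · refine ⟨hlj, ?_⟩
      simpa [ht0 l hlj] using hl
  have h6 := Finset.card_le_card h5
  have h7 := Finset.card_erase_lt_of_mem ((mem_suppF (g s) j).2 hs)
  omega

theorem Good.notT (H : Good g) {i a : Fin n} {s : Fin r} (hi : g s i ≠ 0) (ha : g s a ≠ 0)
    (hne : a ≠ i) : ¬ isT g a := by
  rintro ⟨t, ht⟩
  have := H.T_unique ht s ha
  subst this
  rw [← mem_suppF, ht] at hi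
  simp at hi; exact hne hi.symm

theorem Good.three (H : Good g) {i j a : Fin n} {s : Fin r} (hij : i ≠ j) (hai : a ≠ i)
    (haj : a ≠ j) (hi : g s i ≠ 0) (hj : g s j ≠ 0) (ha : g s a ≠ 0) :
    suppF (g s) = {i, j, a} := by
  symm
  apply Finset.eq_of_subset_of_card_le
  · intro l; simp only [Finset.mem_insert, Finset.mem_singleton, mem_suppF]
    rintro (rfl | rfl | rfl) <;> assumption
  · have := H.le3 s
    rw [wt_eq] at this
    rw [Finset.card_eq_three.2 ⟨i, j, a, hij, hai.symm, haj.symm, rfl⟩]; exact this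

theorem Good.comm3 (H : Good g) {i j a : Fin n} {s : Fin r} (hij : i ≠ j) (hai : a ≠ i)
    (haj : a ≠ j) (hi : g s i ≠ 0) (hj : g s j ≠ 0) (ha : g s a ≠ 0) (t : Fin r) :
    loc (g s i) (g t i) + loc (g s j) (g t j) + loc (g s a) (g t a) = 0 := by
  have h := H.three hij hai haj hi hj ha
  have h1 := H.comm s t
  rw [← Finset.sum_subset (Finset.subset_univ (suppF (g s)))] at h1
  · rw [h, Finset.sum_insert (by simp [hij, hai.symm]), Finset.sum_pair haj.symm] at h1
    rw [add_assoc]; exact h1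
  · intro x _ hx
    rw [mem_suppF, not_not] at hx
    rw [hx, loc_zero_left]

variable (g) in
structure Pr (i j : Fin n) (s t : Fin r) : Prop where
  ij : i ≠ j
  st : s ≠ t
  gen : ∀ u, g u i ≠ 0 → u = s ∨ u = t
  li : loc (g s i) (g t i) ≠ 0
  lj : loc (g s j) (g t j) ≠ 0

theorem Pr.symm {i j : Fin n} {s t : Fin r} (h : Pr g i j s t) : Pr g i j t s :=
  ⟨h.ij, h.st.symm, fun u hu => (h.gen u hu).symm, by rw [loc_comm]; exact h.li,
    by rw [loc_comm]; exact h.lj⟩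

theorem Pr.si {i j : Fin n} {s t : Fin r} (h : Pr g i j s t) : g s i ≠ 0 := loc_ne_left _ _ h.li
theorem Pr.sj {i j : Fin n} {s t : Fin r} (h : Pr g i j s t) : g s j ≠ 0 := loc_ne_left _ _ h.lj

theorem Good.exists_pr (H : Good g) {i : Fin n} (hm : (Gi g i).card = 2) :
    ∃ j s t, Pr g i j s t := by
  obtain ⟨s, t, hst, hG⟩ := Finset.card_eq_two.1 hm
  have hgen : ∀ u, g u i ≠ 0 → u = s ∨ u = t := by
    intro u hu; rw [← mem_Gi, hG] at hu; simpa using hu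
  have hs : g s i ≠ 0 := by rw [← mem_Gi, hG]; simp
  have ht : g t i ≠ 0 := by rw [← mem_Gi, hG]; simp
  have hT : ¬ isT g i := by
    rintro ⟨v, hv⟩
    exact hst ((H.T_unique hv s hs).trans (H.T_unique hv t ht).symm)
  obtain ⟨u, hu⟩ := H.full hT (g s i) hs
  have hut : u = t := by
    rcases hgen u (loc_ne_right _ _ hu) with h | h
    · subst h; exact absurd (loc_self _) hu
    · exact h
  subst hut
  have : ∃ j, j ≠ i ∧ loc (g s j) (g u j) ≠ 0 := by
    by_contra! hcon
    have h1 := H.comm s u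
    rw [Finset.sum_eq_single i (by intro b _ hb; exact hcon b hb) (by simp)] at h1
    exact hu h1
  obtain ⟨j, hj, hl⟩ := this
  exact ⟨j, s, u, hj.symm, hst, hgen, hu, hl⟩

theorem Good.k1 (H : Good g) {i j a : Fin n} {s t : Fin r} (h : Pr g i j s t) (hai : a ≠ i)
    (haj : a ≠ j) (ha : g s a ≠ 0) : loc (g s a) (g t a) = 0 :=
  z2_three _ _ _ h.li h.lj (H.comm3 h.ij hai haj h.si h.sj ha t)

theorem Good.k2 (H : Good g) {i j a : Fin n} {s t : Fin r} (h : Pr g i j s t) (hai : a ≠ i)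
    (haj : a ≠ j) (ha : g s a ≠ 0) (u : Fin r) (hu : loc (g s a) (g u a) ≠ 0) :
    loc (g s j) (g u j) ≠ 0 ∧ u ≠ s ∧ u ≠ t := by
  have h1 : u ≠ s := by rintro rfl; exact hu (loc_self _)
  have h2 : u ≠ t := by rintro rfl; exact hu (H.k1 h hai haj ha)
  refine ⟨?_, h1, h2⟩
  have h3 : g u i = 0 := by
    by_contra h0
    rcases h.gen u h0 with h | h
    · exact h1 h
    · exact h2 h
  have h4 := H.comm3 h.ij hai haj h.si h.sj ha u
  rw [h3, loc_zero_right, zero_add] at h4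
  exact z2_two _ _ hu h4

theorem Good.k3 (H : Good g) {i j a : Fin n} {s t : Fin r} (h : Pr g i j s t) (hai : a ≠ i)
    (haj : a ≠ j) (ha : g s a ≠ 0) :
    ∃ u, loc (g s a) (g u a) ≠ 0 ∧ loc (g s j) (g u j) ≠ 0 ∧ u ≠ s ∧ u ≠ t := by
  obtain ⟨u, hu⟩ := H.full (H.notT h.si ha hai) (g s a) ha
  exact ⟨u, hu, H.k2 h hai haj ha u hu⟩

theorem exists_third {i j : Fin n} {s : Fin r} (h : wt (g s) = 3) :
    ∃ a, a ≠ i ∧ a ≠ j ∧ g s a ≠ 0 := by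
  have : ({i, j} : Finset (Fin n)).card < (suppF (g s)).card := by
    have := Finset.card_le_two (a := i) (b := j)
    rw [← wt_eq, h]; omega
  obtain ⟨a, h1, h2⟩ := Finset.exists_mem_notMem_of_card_lt_card this
  rw [mem_suppF] at h1
  simp at h2
  exact ⟨a, h2.1, h2.2, h1⟩

theorem Good.m3 (H : Good g) {i j : Fin n} {s t : Fin r} (h : Pr g i j s t)
    (h3 : wt (g s) = 3) : 3 ≤ (Gi g j).card := by
  obtain ⟨a, hai, haj, ha⟩ := exists_third (i := i) (j := j) h3
  obtain ⟨u, -, hu, hus, hut⟩ := H.k3 h hai haj ha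
  have : ({s, t, u} : Finset (Fin r)) ⊆ Gi g j := by
    intro l; simp only [Finset.mem_insert, Finset.mem_singleton, mem_Gi]
    rintro (rfl | rfl | rfl)
    · exact h.sj
    · exact h.symm.sj
    · exact loc_ne_right _ _ hu
  have h2 := Finset.card_le_card this
  rwa [Finset.card_eq_three.2 ⟨s, t, u, h.st, hus.symm, hut.symm, rfl⟩] at h2

/-! ### Charges -/

variable (g) in
def DD : Finset (Fin n) :=
  Finset.univ.filter fun i => (Gi g i).card = 2 ∧ ∀ s, g s i ≠ 0 → wt (g s) = 3

variable (g) in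
def L2 (i : Fin n) : Prop := (Gi g i).card = 2 ∧ ∃ s, g s i ≠ 0 ∧ wt (g s) = 3

variable (g) in
def chv (s : Fin r) (i : Fin n) : ℕ :=
  if wt (g s) = 1 then 6 else if wt (g s) = 2 then
    (if L2 g i then 4 else if (Gi g i).card = 2 then 3 else 2) else 2

variable (g) in
def ch (s : Fin r) (i : Fin n) : ℕ := if g s i ≠ 0 then chv g s i else 0

theorem mem_DD (i : Fin n) :
    i ∈ DD g ↔ (Gi g i).card = 2 ∧ ∀ s, g s i ≠ 0 → wt (g s) = 3 := by simp [DD]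

theorem Good.L2_pair (H : Good g) {t : Fin r} {i j : Fin n} (hij : i ≠ j)
    (ht : suppF (g t) = {i, j}) (hL : L2 g i) : 3 ≤ (Gi g j).card := by
  obtain ⟨hm, s, hs, hw⟩ := hL
  obtain ⟨j', u, v, h⟩ := H.exists_pr hm
  have hti : g t i ≠ 0 := by rw [← mem_suppF, ht]; simp
  have hwt : wt (g t) = 2 := by rw [wt_eq, ht, Finset.card_pair hij]
  have hst : s ≠ t := by rintro rfl; omega
  have h' : Pr g i j' s t := by
    rcases h.gen s hs with rfl | rfl
    · rcases h.gen t hti with rfl | rfl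
      · exact absurd rfl hst
      · exact h
    · rcases h.gen t hti with rfl | rfl
      · exact h.symm
      · exact absurd rfl hst
  have : j' = j := by
    have h1 := h'.symm.sj
    rw [← mem_suppF, ht] at h1
    simp at h1
    rcases h1 with h1 | h1
    · exact absurd h1.symm h'.ij
    · exact h1
  subst this
  exact H.m3 h' hw

theorem Good.ch_le (H : Good g) (s : Fin r) : ∑ i, ch g s i ≤ 6 := by
  have h1 : ∑ i, ch g s i = ∑ i ∈ suppF (g s), chv g s i := by
    rw [suppF, Finset.sum_filter]; rfl
  rw [h1]
  have h3 := H.le3 s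
  have hc := wt_eq (g s)
  interval_cases hw : wt (g s)
  · rw [Finset.card_eq_zero.1 hc.symm]; simp
  · rw [Finset.sum_congr rfl (g := fun _ => 6) (by intro x _; simp [chv, hw])]
    simp [← hc]
  · obtain ⟨i, j, hij, hS⟩ := Finset.card_eq_two.1 hc.symm
    rw [hS, Finset.sum_pair hij]
    have A := H.L2_pair hij hS
    have B := H.L2_pair hij.symm (by rw [hS, Finset.pair_comm])
    simp only [chv, hw]
    by_cases hi : L2 g i <;> by_cases hj : L2 g j
    · have := A hi; have := hj.1; omega
    · have := A hi; simp [hi, hj]; split_ifs <;> omega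
    · have := B hj; simp [hi, hj]; split_ifs <;> omega
    · simp [hi, hj]; split_ifs <;> omega
  · rw [Finset.sum_congr rfl (g := fun _ => 2) (by intro x _; simp [chv, hw])]
    simp [← hc]

variable (g) in
def cw (i : Fin n) : ℕ := ∑ s, ch g s i

theorem Good.cw_sum (H : Good g) : ∑ i, cw g i ≤ 6 * r := by
  unfold cw
  rw [Finset.sum_comm]
  calc _ ≤ ∑ s : Fin r, 6 := Finset.sum_le_sum fun s _ => H.ch_le s
    _ = _ := by simp [mul_comm]

theorem cw_eq (i : Fin n) : cw g i = ∑ s ∈ Gi g i, chv g s i := by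
  rw [Gi, Finset.sum_filter]; rfl

theorem chv_ge (s : Fin r) (i : Fin n) : 2 ≤ chv g s i := by
  unfold chv; split_ifs <;> omega

theorem cw_ge (i : Fin n) : 2 * (Gi g i).card ≤ cw g i := by
  rw [cw_eq, mul_comm, ← smul_eq_mul]
  exact Finset.card_nsmul_le_sum _ _ _ fun s _ => chv_ge s i

theorem wt_pos {s : Fin r} {i : Fin n} (h : g s i ≠ 0) : 1 ≤ wt (g s) := by
  rw [wt_eq]; exact Finset.card_pos.2 ⟨i, (mem_suppF _ _).2 h⟩

theorem Good.cw_ge6 (H : Good g) {i : Fin n} (hi : i ∉ DD g) : 6 ≤ cw g i := by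
  by_cases hT : isT g i
  · obtain ⟨s, hs⟩ := hT
    rw [cw_eq]
    have h1 : s ∈ Gi g i := by rw [mem_Gi, ← mem_suppF, hs]; simp
    refine le_trans ?_ (Finset.single_le_sum (f := fun s => chv g s i) (fun _ _ => Nat.zero_le _) h1)
    have : wt (g s) = 1 := by rw [wt_eq, hs]; simp
    simp [chv, this]
  · obtain ⟨s, hs⟩ := H.full hT (1, 0) (by decide)
    obtain ⟨t, ht⟩ := H.full hT (g s i) (loc_ne_right _ _ hs)
    have hst : s ≠ t := by rintro rfl; exact ht (loc_self _)
    have hsub : ({s, t} : Finset (Fin r)) ⊆ Gi g i := by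
      intro l; simp only [Finset.mem_insert, Finset.mem_singleton, mem_Gi]
      rintro (rfl | rfl)
      · exact loc_ne_left _ _ ht
      · exact loc_ne_right _ _ ht
    have h2 := Finset.card_le_card hsub
    rw [Finset.card_pair hst] at h2
    by_cases hm : (Gi g i).card = 2
    · have hG : Gi g i = {s, t} := (Finset.eq_of_subset_of_card_le hsub
        (by rw [Finset.card_pair hst, hm])).symm
      rw [cw_eq, hG, Finset.sum_pair hst]
      have hs1 := wt_pos (loc_ne_left _ _ ht)
      have ht1 := wt_pos (loc_ne_right _ _ ht)
      have hs3 := H.le3 s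
      have ht3 := H.le3 t
      have hn : ¬ (wt (g s) = 3 ∧ wt (g t) = 3) := by
        rintro ⟨ha, hb⟩
        apply hi
        rw [mem_DD]
        refine ⟨hm, fun u hu => ?_⟩
        rw [← mem_Gi, hG] at hu
        simp at hu
        rcases hu with rfl | rfl <;> assumption
      have hL1 : wt (g s) = 3 → L2 g i := fun h => ⟨hm, s, loc_ne_left _ _ ht, h⟩
      have hL2 : wt (g t) = 3 → L2 g i := fun h => ⟨hm, t, loc_ne_right _ _ ht, h⟩
      unfold chv
      by_cases hL : L2 g i
      · simp only [hL, if_true]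
        split_ifs <;> omega
      · have : wt (g s) ≠ 3 := fun h => hL (hL1 h)
        have : wt (g t) ≠ 3 := fun h => hL (hL2 h)
        simp only [hL, hm, if_true, if_false]
        split_ifs <;> omega
    · have := cw_ge (g := g) i
      omega

/-! ### Fibres -/

theorem fiber_bound {j : Fin n} {F : Finset (Fin n)} (B : ℕ)
    (hF : ∀ x ∈ F, ∃ s t, Pr g x j s t)
    (hB : ∀ s ∈ Gi g j, (F.filter fun x => g s x ≠ 0).card ≤ B) :
    F.card * 2 ≤ (Gi g j).card * B := by
  apply Finset.card_mul_le_card_mul (fun x s => g s x ≠ 0)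
  · intro x hx
    obtain ⟨s, t, h⟩ := hF x hx
    refine (Finset.card_pair h.st).symm.le.trans ?_
    apply Finset.card_le_card
    intro l
    simp only [Finset.mem_insert, Finset.mem_singleton, Finset.mem_bipartiteAbove, mem_Gi]
    rintro (rfl | rfl)
    · exact ⟨h.sj, h.si⟩
    · exact ⟨h.symm.sj, h.symm.si⟩
  · intro s hs
    exact hB s hs

theorem Good.part1 (H : Good g) : 3 * n ≤ 4 * r := by
  have h0 : ∀ i, ∃ j, i ∈ DD g → ∃ s t, Pr g i j s t := by
    intro i
    by_cases hi : i ∈ DD g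
    · obtain ⟨j, h⟩ := H.exists_pr ((mem_DD i).1 hi).1
      exact ⟨j, fun _ => h⟩
    · exact ⟨i, fun h => absurd h hi⟩
  choose φ hφ using h0
  have key : ∀ i ∈ Finset.univ, 9 + ((DD g).filter fun x => φ x = i).card
      ≤ 2 * cw g i + (if i ∈ DD g then 1 else 0) := by
    intro j _
    have hm : ((DD g).filter fun x => φ x = j).card = 0 ∨ 3 ≤ (Gi g j).card := by
      rcases Finset.eq_empty_or_nonempty ((DD g).filter fun x => φ x = j) with h | ⟨x, hx⟩
      · left; simp [h]
      · right
        rw [Finset.mem_filter] at hx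
        obtain ⟨s, t, h⟩ := hφ x hx.1
        rw [hx.2] at h
        exact H.m3 h (((mem_DD x).1 hx.1).2 s h.si)
    have hc := fiber_bound (g := g) (j := j) (F := (DD g).filter fun x => φ x = j) 2 (by
      intro x hx
      rw [Finset.mem_filter] at hx
      have := hφ x hx.1
      rwa [hx.2] at this) (by
      intro s hs
      have : ((DD g).filter fun x => φ x = j).filter (fun x => g s x ≠ 0)
          ⊆ (suppF (g s)).erase j := by
        intro x hx
        simp only [Finset.mem_filter] at hx
        obtain ⟨s', t', h⟩ := hφ x hx.1.1
        rw [hx.1.2] at h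
        rw [Finset.mem_erase, mem_suppF]
        exact ⟨h.ij, hx.2⟩
      refine (Finset.card_le_card this).trans ?_
      rw [Finset.card_erase_of_mem ((mem_suppF _ _).2 ((mem_Gi _ _).1 hs)), ← wt_eq]
      have := H.le3 s
      omega)
    have hw := cw_ge (g := g) j
    by_cases hj : j ∈ DD g
    · have := ((mem_DD j).1 hj).1
      simp only [hj, if_true]
      omega
    · have := H.cw_ge6 hj
      simp only [hj, if_false]
      omega
  have h1 := Finset.sum_le_sum key
  rw [Finset.sum_add_distrib, Finset.sum_add_distrib, ← Finset.card_eq_sum_card_fiberwise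
    (fun x _ => Finset.mem_coe.2 (Finset.mem_univ _)), ← Finset.mul_sum] at h1
  have h2 := H.cw_sum
  simp at h1
  omega

/-! ### Distance three -/

theorem Good3.X (H3 : Good3 g) (H : Good g) {i q : Fin n} (hi : i ∈ DD g) (hiq : i ≠ q)
    {p p' : ZMod 2 × ZMod 2} (hp : p ≠ 0)
    (h : ∀ v, loc p (g v i) + loc p' (g v q) = 0) : False := by
  have hxi : (Pi.single i p + Pi.single q p' : Pauli n) i = p := by simp [hiq]
  have hxq : (Pi.single i p + Pi.single q p' : Pauli n) q = p' := by simp [hiq.symm]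
  have hx0 : ∀ l, l ≠ i → l ≠ q → (Pi.single i p + Pi.single q p' : Pauli n) l = 0 := by
    intro l h1 h2; simp [h1, h2]
  generalize (Pi.single i p + Pi.single q p' : Pauli n) = x at *
  have hw : wt x ≤ 2 := by
    rw [wt_eq]
    refine le_trans (Finset.card_le_card (t := {i, q}) ?_) Finset.card_le_two
    intro l hl
    rw [mem_suppF] at hl
    by_contra hc
    simp at hc
    exact hl (hx0 l hc.1 hc.2)
  obtain ⟨c, hc⟩ := H3 x (by
    intro v
    rw [← Finset.sum_subset (Finset.subset_univ ({i, q} : Finset (Fin n)))]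
    · rw [Finset.sum_pair hiq, hxi, hxq]; exact h v
    · intro l _ hl
      simp at hl
      rw [hx0 l hl.1 hl.2, loc_zero_left]) hw
  obtain ⟨s, hs, hg⟩ := exists_of_sum_ne c i (by rw [← hc, hxi]; exact hp)
  have h1 := H.min c s hs
  rw [← hc, ((mem_DD i).1 hi).2 s hg] at h1
  omega

theorem Good3.N (H3 : Good3 g) (H : Good g) {i a : Fin n} (hi : i ∈ DD g) (ha : a ∈ DD g)
    (hia : i ≠ a) {s : Fin r} (hsi : g s i ≠ 0) (hsa : g s a ≠ 0) : False := by
  have aux : ∀ b, b ∈ DD g → g s b ≠ 0 → ∃ t, loc (g t b) (g s b) ≠ 0 ∧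
      ∀ v, v ≠ s → loc (g t b) (g v b) = 0 := by
    intro b hb hsb
    obtain ⟨j, u, t, h⟩ := H.exists_pr ((mem_DD b).1 hb).1
    have : ∃ t, Pr g b j s t := by
      rcases h.gen s hsb with rfl | rfl
      · exact ⟨_, h⟩
      · exact ⟨_, h.symm⟩
    obtain ⟨t, h⟩ := this
    refine ⟨t, h.symm.li, fun v hv => ?_⟩
    by_cases hvb : g v b = 0
    · rw [hvb, loc_zero_right]
    · rcases h.gen v hvb with rfl | rfl
      · exact absurd rfl hv
      · exact loc_self _
  obtain ⟨t, ht, ht'⟩ := aux i hi hsi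
  obtain ⟨u, hu, hu'⟩ := aux a ha hsa
  apply H3.X H hi hia (p := g t i) (p' := g u a) (loc_ne_left _ _ ht)
  intro v
  by_cases hv : v = s
  · subst hv; exact z2_add _ _ ht hu
  · rw [ht' v hv, hu' v hv, add_zero]

theorem Good3.m4 (H3 : Good3 g) (H : Good g) {i j : Fin n} {s t : Fin r} (hi : i ∈ DD g)
    (h : Pr g i j s t) : 4 ≤ (Gi g j).card := by
  have h3 := H.m3 h (((mem_DD i).1 hi).2 s h.si)
  by_contra hlt
  have hc : (Gi g j).card = 3 := by omega
  have hsub : ({s, t} : Finset (Fin r)) ⊆ Gi g j := by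
    intro l; simp only [Finset.mem_insert, Finset.mem_singleton, mem_Gi]
    rintro (rfl | rfl)
    · exact h.sj
    · exact h.symm.sj
  have hc1 : (Gi g j \ {s, t}).card = 1 := by
    rw [Finset.card_sdiff_of_subset hsub, hc, Finset.card_pair h.st]
  obtain ⟨u, hu⟩ := Finset.card_eq_one.1 hc1
  have huj : u ∈ Gi g j \ {s, t} := by rw [hu]; simp
  simp [mem_Gi] at huj
  have hall : ∀ v, v ≠ s → v ≠ t → g v j ≠ 0 → v = u := by
    intro v h1 h2 h3
    have : v ∈ Gi g j \ {s, t} := by simp [mem_Gi, h1, h2, h3]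
    rw [hu] at this; simpa using this
  obtain ⟨p, hp1, hp2⟩ := loc_solve (g s i) (g t i) (loc (g u j) (g s j)) (loc (g u j) (g t j)) h.li
  have hp : p ≠ 0 := by
    rintro rfl
    rw [loc_zero_left] at hp1 hp2
    rcases loc_detect _ _ _ h.lj huj.1 with h | h
    · exact h hp1.symm
    · exact h hp2.symm
  apply H3.X H hi h.ij (p := p) (p' := g u j) hp
  intro v
  by_cases hvs : v = s
  · subst hvs; rw [hp1]; exact CharTwo.add_self_eq_zero _
  by_cases hvt : v = t
  · subst hvt; rw [hp2]; exact CharTwo.add_self_eq_zero _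
  have h0 : g v i = 0 := by
    by_contra h0
    rcases h.gen v h0 with h | h
    · exact hvs h
    · exact hvt h
  rw [h0, loc_zero_right, zero_add]
  by_cases hvj : g v j = 0
  · rw [hvj, loc_zero_right]
  · rw [hall v hvs hvt hvj, loc_self]

/-- In the four-generator configuration the second generator avoids the common qubit. -/
theorem Good.cfg_aux (H : Good g) {i i' j a : Fin n} {s t u v : Fin r}
    (h : Pr g i j s t) (h' : Pr g i' j u v) (hai : a ≠ i) (haj : a ≠ j) (hai' : a ≠ i')
    (hvi : g v i = 0)
    (hsu : loc (g s a) (g u a) ≠ 0) : g t a = 0 := by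
  by_contra hta
  have hsa := loc_ne_left _ _ hsu
  have hua := loc_ne_right _ _ hsu
  have e1 : g s a = g t a := loc_eq_of _ _ hsa hta (H.k1 h hai haj hsa)
  have hsuj := (H.k2 h hai haj hsa u hsu).1
  have htuj := (H.k2 h.symm hai haj hta u (by rw [← e1]; exact hsu)).1
  rw [loc_comm] at hsuj htuj
  have hu : g u j = g s j + g t j := loc_third _ _ _ h.lj hsuj htuj
  have hva : g v a = 0 := by
    by_contra hva
    have e2 : g u a = g v a := loc_eq_of _ _ hua hva (H.k1 h' hai' haj hua)
    have a1 := (H.k2 h hai haj hsa v (by rw [← e2]; exact hsu)).1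
    have a2 := (H.k2 h.symm hai haj hta v (by rw [← e1, ← e2]; exact hsu)).1
    rw [loc_comm] at a1 a2
    have hv : g v j = g s j + g t j := loc_third _ _ _ h.lj a1 a2
    apply h'.lj
    rw [hu, hv, loc_self]
  rcases loc_detect _ _ _ h.lj h'.symm.sj with hh | hh
  · have := H.comm3 h.ij hai haj h.si h.sj hsa v
    rw [hvi, hva, loc_zero_right, loc_zero_right, zero_add, add_zero, loc_comm] at this
    exact hh this
  · have := H.comm3 h.ij hai haj h.symm.si h.symm.sj hta v
    rw [hvi, hva, loc_zero_right, loc_zero_right, zero_add, add_zero, loc_comm] at this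
    exact hh this

theorem Good3.cfg (H3 : Good3 g) (H : Good g) {i i' j a : Fin n} {s t u v : Fin r}
    (hi : i ∈ DD g) (hi' : i' ∈ DD g)
    (h : Pr g i j s t) (h' : Pr g i' j u v) (hai : a ≠ i) (haj : a ≠ j)
    (hui : g u i = 0) (hvi : g v i = 0) (hsi' : g s i' = 0) (hti' : g t i' = 0)
    (hG : ∀ w, g w j ≠ 0 → w = s ∨ w = t ∨ w = u ∨ w = v)
    (hsu : loc (g s a) (g u a) ≠ 0) : False := by
  have hsa := loc_ne_left _ _ hsu
  have hua := loc_ne_right _ _ hsu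
  have hai' : a ≠ i' := by rintro rfl; exact hsa hsi'
  have hta := H.cfg_aux h h' hai haj hai' hvi hsu
  have hva := H.cfg_aux h' h hai' haj hai hti' (by rw [loc_comm]; exact hsu)
  have hus : s ≠ u := by rintro rfl; exact hsu (loc_self _)
  have hall : ∀ w, g w a ≠ 0 → w = s ∨ w = u := by
    intro w hw
    have hwj : g w j ≠ 0 := by
      rcases loc_detect _ _ _ hsu hw with hh | hh
      · rw [loc_comm] at hh
        exact loc_ne_right _ _ (H.k2 h hai haj hsa w hh).1
      · rw [loc_comm] at hh
        exact loc_ne_right _ _ (H.k2 h' hai' haj hua w hh).1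
    rcases hG w hwj with rfl | rfl | rfl | rfl
    · exact Or.inl rfl
    · exact absurd hta hw
    · exact Or.inr rfl
    · exact absurd hva hw
  have hGa : Gi g a = {s, u} := by
    ext w
    rw [mem_Gi]
    simp only [Finset.mem_insert, Finset.mem_singleton]
    constructor
    · exact hall w
    · rintro (rfl | rfl) <;> assumption
  have haD : a ∈ DD g := by
    rw [mem_DD]
    refine ⟨by rw [hGa, Finset.card_pair hus], fun w hw => ?_⟩
    rcases hall w hw with rfl | rfl
    · exact ((mem_DD i).1 hi).2 _ h.si
    · exact ((mem_DD i').1 hi').2 _ h'.si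
  exact H3.N H hi haD hai.symm h.si hsa

theorem Good3.no4 (H3 : Good3 g) (H : Good g) {i i' j : Fin n} {s t u v : Fin r}
    (hi : i ∈ DD g) (hi' : i' ∈ DD g) (hii : i ≠ i')
    (h : Pr g i j s t) (h' : Pr g i' j u v) (hc : (Gi g j).card = 4) : False := by
  have n1 : ∀ w, g w i ≠ 0 → g w i' = 0 := by
    intro w h1; by_contra h2; exact H3.N H hi hi' hii h1 h2
  have hsi' := n1 s h.si
  have hti' := n1 t h.symm.si
  have hui : g u i = 0 := by by_contra h1; exact h'.si (n1 u h1)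
  have hvi : g v i = 0 := by by_contra h1; exact h'.symm.si (n1 v h1)
  have su : s ≠ u := by rintro rfl; exact h.si hui
  have sv : s ≠ v := by rintro rfl; exact h.si hvi
  have tu : t ≠ u := by rintro rfl; exact h.symm.si hui
  have tv : t ≠ v := by rintro rfl; exact h.symm.si hvi
  have hcard : ({s, t, u, v} : Finset (Fin r)).card = 4 := by
    rw [Finset.card_insert_of_notMem (by simp [h.st, su, sv]),
      Finset.card_insert_of_notMem (by simp [tu, tv]), Finset.card_pair h'.st]
  have hG0 : ({s, t, u, v} : Finset (Fin r)) = Gi g j := by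
    apply Finset.eq_of_subset_of_card_le
    · intro l; simp only [Finset.mem_insert, Finset.mem_singleton, mem_Gi]
      rintro (rfl | rfl | rfl | rfl)
      · exact h.sj
      · exact h.symm.sj
      · exact h'.sj
      · exact h'.symm.sj
    · omega
  have hG : ∀ w, g w j ≠ 0 → w = s ∨ w = t ∨ w = u ∨ w = v := by
    intro w hw
    rw [← mem_Gi, ← hG0] at hw
    simpa using hw
  obtain ⟨a, hai, haj, ha⟩ := exists_third (i := i) (j := j) (((mem_DD i).1 hi).2 s h.si)
  obtain ⟨x, hx, hxj, hxs, hxt⟩ := H.k3 h hai haj ha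
  rcases hG x (loc_ne_right _ _ hxj) with rfl | rfl | rfl | rfl
  · exact hxs rfl
  · exact hxt rfl
  · exact H3.cfg H hi hi' h h' hai haj hui hvi hsi' hti' hG hx
  · exact H3.cfg H hi hi' h h'.symm hai haj hvi hui hsi' hti'
      (fun w hw => by rcases hG w hw with h | h | h | h <;> simp [h]) hx

theorem Good3.part2 (H3 : Good3 g) (H : Good g) : n ≤ r := by
  have h0 : ∀ i, ∃ j, i ∈ DD g → ∃ s t, Pr g i j s t := by
    intro i
    by_cases hi : i ∈ DD g
    · obtain ⟨j, h⟩ := H.exists_pr ((mem_DD i).1 hi).1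
      exact ⟨j, fun _ => h⟩
    · exact ⟨i, fun h => absurd h hi⟩
  choose φ hφ using h0
  have key : ∀ i ∈ Finset.univ, 6 + 2 * ((DD g).filter fun x => φ x = i).card
      ≤ cw g i + 2 * (if i ∈ DD g then 1 else 0) := by
    intro j _
    have hm : ((DD g).filter fun x => φ x = j).card = 0 ∨ 4 ≤ (Gi g j).card := by
      rcases Finset.eq_empty_or_nonempty ((DD g).filter fun x => φ x = j) with h | ⟨x, hx⟩
      · left; simp [h]
      · right
        rw [Finset.mem_filter] at hx
        obtain ⟨s, t, h⟩ := hφ x hx.1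
        rw [hx.2] at h
        exact H3.m4 H hx.1 h
    have hm4 : (Gi g j).card = 4 → ((DD g).filter fun x => φ x = j).card ≤ 1 := by
      intro hc
      rw [Finset.card_le_one]
      intro x hx y hy
      by_contra hxy
      rw [Finset.mem_filter] at hx hy
      obtain ⟨s, t, h⟩ := hφ x hx.1
      obtain ⟨u, v, h'⟩ := hφ y hy.1
      rw [hx.2] at h
      rw [hy.2] at h'
      exact H3.no4 H hx.1 hy.1 hxy h h' hc
    have hc := fiber_bound (g := g) (j := j) (F := (DD g).filter fun x => φ x = j) 1 (by
      intro x hx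
      rw [Finset.mem_filter] at hx
      have := hφ x hx.1
      rwa [hx.2] at this) (by
      intro s hs
      rw [Finset.card_le_one]
      intro x hx y hy
      by_contra hxy
      simp only [Finset.mem_filter] at hx hy
      exact H3.N H hx.1.1 hy.1.1 hxy hx.2 hy.2)
    have hw := cw_ge (g := g) j
    by_cases hj : j ∈ DD g
    · have := ((mem_DD j).1 hj).1
      simp only [hj, if_true]
      omega
    · have := H.cw_ge6 hj
      simp only [hj, if_false]
      omega
  have h1 := Finset.sum_le_sum key
  rw [Finset.sum_add_distrib, Finset.sum_add_distrib, ← Finset.mul_sum,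
    ← Finset.card_eq_sum_card_fiberwise
    (fun x _ => Finset.mem_coe.2 (Finset.mem_univ _)), ← Finset.mul_sum] at h1
  have h2 := H.cw_sum
  simp at h1
  omega

end comb

/-! ### Linear algebra -/

theorem sympl_add_right (x u v : PauliT ι) : sympl x (u + v) = sympl x u + sympl x v := by
  simp only [sympl, ← Finset.sum_add_distrib]
  refine Finset.sum_congr rfl fun i _ => ?_
  simp; ring

theorem sympl_smul_right (c : ZMod 2) (x u : PauliT ι) : sympl x (c • u) = c * sympl x u := by
  simp only [sympl, Finset.mul_sum]
  refine Finset.sum_congr rfl fun i _ => ?_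
  simp; ring

theorem inDual_of_span {r : ℕ} {G : Submodule (ZMod 2) (PauliT ι)} {g : Fin r → PauliT ι}
    (hs : Submodule.span (ZMod 2) (Set.range g) = G) {x : PauliT ι}
    (h : ∀ s, sympl x (g s) = 0) : inDual G x := by
  intro y hy
  rw [← hs] at hy
  induction hy using Submodule.span_induction with
  | mem y hy => obtain ⟨s, rfl⟩ := hy; exact h s
  | zero => simp [sympl]
  | add u v _ _ hu hv => rw [sympl_add_right, hu, hv, add_zero]
  | smul c u _ hu => rw [sympl_smul_right, hu, mul_zero]

theorem exists_min_family {n r : ℕ} {G : Submodule (ZMod 2) (Pauli n)} {g₀ : Fin r → Pauli n}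
    (hs : Submodule.span (ZMod 2) (Set.range g₀) = G) (h3 : ∀ s, wt (g₀ s) ≤ 3) :
    ∃ g : Fin r → Pauli n, Submodule.span (ZMod 2) (Set.range g) = G ∧ (∀ s, wt (g s) ≤ 3) ∧
      ∀ (c : Fin r → ZMod 2) s, c s ≠ 0 → wt (g s) ≤ wt (∑ t, c t • g t) := by
  let A : Set (Fin r → Pauli n) :=
    {g | Submodule.span (ZMod 2) (Set.range g) = G ∧ ∀ s, wt (g s) ≤ 3}
  obtain ⟨g, ⟨hg, hg3⟩, hmin⟩ := Set.exists_min_image A (fun g => ∑ s, wt (g s))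
    (Set.toFinite A) ⟨g₀, hs, h3⟩
  refine ⟨g, hg, hg3, fun c s hcs => ?_⟩
  by_contra! hlt
  set e := ∑ t, c t • g t with he
  have heG : e ∈ G := by
    rw [← hg]
    exact Submodule.sum_mem _ fun t _ => Submodule.smul_mem _ _ (Submodule.subset_span ⟨t, rfl⟩)
  have hA : Function.update g s e ∈ A := by
    refine ⟨le_antisymm ?_ ?_, ?_⟩
    · rw [Submodule.span_le]
      rintro _ ⟨t, rfl⟩
      by_cases ht : t = s
      · subst ht; simpa using heG
      · rw [Function.update_of_ne ht, ← hg]; exact Submodule.subset_span ⟨t, rfl⟩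
    · have hother : ∀ t, t ≠ s →
          g t ∈ Submodule.span (ZMod 2) (Set.range (Function.update g s e)) := by
        intro t ht
        exact Submodule.subset_span ⟨t, by rw [Function.update_of_ne ht]⟩
      conv_lhs => rw [← hg]
      rw [Submodule.span_le]
      rintro _ ⟨t, rfl⟩
      by_cases ht : t = s
      · subst ht
        have h1 : c t • g t + ∑ x ∈ Finset.univ.erase t, c x • g x = e :=
          Finset.add_sum_erase _ (fun x => c x • g x) (Finset.mem_univ t)
        rw [z2_one _ hcs, one_smul] at h1
        rw [← eq_sub_iff_add_eq] at h1
        rw [h1]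
        refine Submodule.sub_mem _ (Submodule.subset_span ⟨t, by simp⟩) ?_
        refine Submodule.sum_mem _ fun x hx => Submodule.smul_mem _ _ (hother x ?_)
        exact Finset.ne_of_mem_erase hx
      · exact hother t ht
    · intro t
      by_cases ht : t = s
      · subst ht; rw [Function.update_self]; exact hlt.le.trans (hg3 t)
      · rw [Function.update_of_ne ht]; exact hg3 t
  have h1 := hmin _ hA
  have h2 : ∑ t, wt (Function.update g s e t) < ∑ t, wt (g t) := by
    refine Finset.sum_lt_sum (fun t _ => ?_) ⟨s, Finset.mem_univ _, ?_⟩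
    · by_cases ht : t = s
      · subst ht; rw [Function.update_self]; exact hlt.le
      · rw [Function.update_of_ne ht]
    · rw [Function.update_self]; exact hlt
  exact absurd h1 (not_le.2 h2)

theorem Wgt_attained {G : Submodule (ZMod 2) (PauliT ι)} (hW : Wgt G = 3) :
    ∃ (r : ℕ) (g : Fin r → PauliT ι), IsBasisFam G g ∧
      (Finset.univ.sup fun i => (wt (g i) : ℕ∞)) = 3 := by
  have hlt : Wgt G < 4 := by rw [hW]; norm_num
  have h1 := hlt
  simp only [Wgt, iInf_lt_iff] at h1
  obtain ⟨r, g, hg, h⟩ := h1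
  refine ⟨r, g, hg, le_antisymm ?_ ?_⟩
  · exact Order.le_of_lt_add_one (by convert h using 1; norm_num)
  · rw [← hW]
    exact iInf_le_of_le r (iInf_le_of_le g (iInf_le_of_le hg le_rfl))

/-- a stabilizer code with parameters `[[n,k,d;3]]`, `k ≥ 1`, `d ≥ 2`,
has `d = 2` and rate `k/n ≤ 1/4`. -/
theorem weight_three_codes (n k : ℕ) (d : ℕ∞) (hk : 1 ≤ k) (hd : 2 ≤ d)
    (G : Submodule (ZMod 2) (Pauli n)) (hG : IsStabilizer G)
    (hdim : Module.finrank (ZMod 2) ↥G = n - k) (hdist : distG G = d)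
    (hW : Wgt G = 3) :
    d = 2 ∧ 4 * k ≤ n := by
  obtain ⟨r, g₀, ⟨hli, hspan⟩, hsup⟩ := Wgt_attained hW
  have hr : r = n - k := by
    rw [← hdim, ← hspan, finrank_span_eq_card hli, Fintype.card_fin]
  have h3 : ∀ s, wt (g₀ s) ≤ 3 := by
    intro s
    have : (wt (g₀ s) : ℕ∞) ≤ 3 := by
      rw [← hsup]; exact Finset.le_sup (f := fun i => (wt (g₀ i) : ℕ∞)) (Finset.mem_univ s)
    exact_mod_cast this
  have hn : n ≠ 0 := by
    rintro rfl
    have : r = 0 := by omega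
    subst this
    simp at hsup
  obtain ⟨g, hg, hg3, hmin⟩ := exists_min_family hspan h3
  have hdual : ∀ m : ℕ, (m : ℕ∞) < d → ∀ x : Pauli n,
      (∀ s, ∑ i, loc (x i) (g s i) = 0) → wt x ≤ m →
      ∃ c : Fin r → ZMod 2, x = ∑ t, c t • g t := by
    intro m hm x hx hw
    have hxD : inDual G x := inDual_of_span hg hx
    have hxG : x ∈ G := by
      by_contra hxG
      have : distG G ≤ (wt x : ℕ∞) := sInf_le ⟨x, ⟨hxD, hxG⟩, rfl⟩
      rw [hdist] at this
      have h2 : (wt x : ℕ∞) ≤ m := by exact_mod_cast hw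
      exact absurd (hm.trans_le (this.trans h2)) (lt_irrefl _)
    rw [← hg, Submodule.mem_span_range_iff_exists_fun] at hxG
    obtain ⟨c, hc⟩ := hxG
    exact ⟨c, hc.symm⟩
  have hmem : ∀ s, g s ∈ G := fun s => by rw [← hg]; exact Submodule.subset_span ⟨s, rfl⟩
  have H : Good g := ⟨hg3, fun s t => hG _ (hmem s) _ (hmem t), hmin,
    hdual 1 (lt_of_lt_of_le (by norm_num) hd)⟩
  have hp1 := H.part1
  refine ⟨?_, by omega⟩
  by_contra hne
  have hlt : ((2 : ℕ) : ℕ∞) < d := lt_of_le_of_ne (by exact_mod_cast hd) (by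
    intro h; apply hne; rw [← h]; norm_num)
  have H3 : Good3 g := hdual 2 hlt
  have := H3.part2 H
  omega

end
end

section
/- Let G ⊆ P_n be a stabilizer group of dimension r and let S = {g_1, …, g_r} be a weight-optimal generating set of G. Then the maximum and average weight of S simultaneously attain their optimal values: max_{i} wt(g_i) = W(G) and (1/r)·Σ_i wt(g_i) = W^avg(G). -/
open scoped Classical

noncomputable section

variable {ι : Type} [Fintype ι]

/-- a weight-optimal generating set simultaneously attains the optimal
maximum weight `W(G)` and the optimal average weight `W^avg(G)`. -/
theorem weightOptimal_attains_max_and_avg (n r : ℕ) (G : Submodule (ZMod 2) (Pauli n))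
    (hG : IsStabilizer G) (hdim : Module.finrank (ZMod 2) ↥G = r)
    (g : Fin r → Pauli n) (hopt : IsWeightOptimalBasis G g) :
    (Finset.univ.sup fun i => (wt (g i) : ℕ∞)) = Wgt G ∧
    IsLeast (WavgSet G) ((∑ i, (wt (g i) : ℚ)) / (r : ℚ)) := by
  obtain ⟨hb, hmono, hmin⟩ := hopt
  have key : ∀ (s : ℕ) (h : Fin s → Pauli n), IsBasisFam G h →
      s = r ∧ ∃ e : Fin r ≃ Fin s, ∀ i, wt (g i) ≤ wt (h (e i)) := by
    intro s h hh
    have hs : s = r := by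
      have h1 := finrank_span_eq_card hh.1
      rw [hh.2, hdim] at h1
      simpa using h1.symm
    subst hs
    refine ⟨rfl, Tuple.sort (fun i => wt (h i)), fun i => ?_⟩
    refine hmin (fun i => h (Tuple.sort (fun i => wt (h i)) i)) ⟨?_, ?_⟩ ?_ i
    · exact hh.1.comp _ (Tuple.sort (fun i => wt (h i))).injective
    · rw [← hh.2]
      congr 1
      exact (Tuple.sort (fun i => wt (h i))).surjective.range_comp h
    · exact Tuple.monotone_sort (fun i => wt (h i))
  refine ⟨le_antisymm ?_ ?_, ⟨r, g, hb, rfl⟩, ?_⟩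
  · refine le_iInf fun s => le_iInf fun h => le_iInf fun hh => ?_
    obtain ⟨-, e, he⟩ := key s h hh
    refine Finset.sup_le fun i _ => ?_
    exact le_trans (Nat.cast_le.mpr (he i))
      (Finset.le_sup (f := fun i => (wt (h i) : ℕ∞)) (Finset.mem_univ (e i)))
  · exact iInf_le_of_le r (iInf_le_of_le g (iInf_le_of_le hb le_rfl))
  · rintro x ⟨s, h, hh, rfl⟩
    obtain ⟨hs, e, he⟩ := key s h hh
    subst hs
    rw [← Equiv.sum_comp e (fun i => (wt (h i) : ℚ))]
    refine div_le_div_of_nonneg_right ?_ (Nat.cast_nonneg _)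
    exact Finset.sum_le_sum fun i _ => Nat.cast_le.mpr (he i)

end
end

section
/- Every stabilizer group G ⊆ P_n (indeed every 𝔽₂-subspace of P_n) admits a weight-optimal generating set: there is an 𝔽₂-basis g_1, …, g_r of G with wt(g_1) ≤ … ≤ wt(g_r) such that for every 𝔽₂-basis h_1, …, h_r of G ordered with wt(h_1) ≤ … ≤ wt(h_r), one has wt(g_i) ≤ wt(h_i) for all i = 1, …, r. -/
open scoped Classical

noncomputable section

variable {ι : Type} [Fintype ι]

theorem span_Iio_le {n : ℕ} (g : ℕ → Pauli n) (k : ℕ) :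
    Module.finrank (ZMod 2) (Submodule.span (ZMod 2) (g '' Set.Iio k)) ≤ k := by
  have h := finrank_range_le_card (R := ZMod 2) (fun i : Fin k => g i)
  have e : Set.range (fun i : Fin k => g i) = g '' Set.Iio k := by
    ext x
    constructor
    · rintro ⟨i, rfl⟩
      exact ⟨i, i.2, rfl⟩
    · rintro ⟨i, hi, rfl⟩
      exact ⟨⟨i, hi⟩, rfl⟩
  rw [e] at h
  simpa [Set.finrank] using h

theorem greedy_seq {n : ℕ} (G : Submodule (ZMod 2) (Pauli n)) (k : ℕ)
    (hk : k ≤ Module.finrank (ZMod 2) ↥G) :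
    ∃ g : ℕ → Pauli n, ∀ i < k, g i ∈ G ∧
      g i ∉ Submodule.span (ZMod 2) (g '' Set.Iio i) ∧
      ∀ v ∈ G, v ∉ Submodule.span (ZMod 2) (g '' Set.Iio i) → wt (g i) ≤ wt v := by
  induction k with
  | zero => exact ⟨fun _ => 0, by simp⟩
  | succ k ih =>
    obtain ⟨g, hg⟩ := ih (by omega)
    have hex : ∃ v ∈ G, v ∉ Submodule.span (ZMod 2) (g '' Set.Iio k) := by
      by_contra! hc
      have h1 := Submodule.finrank_mono (show G ≤ _ from hc)
      have h2 := span_Iio_le g k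
      omega
    let S : Set (Pauli n) := {v | v ∈ G ∧ v ∉ Submodule.span (ZMod 2) (g '' Set.Iio k)}
    have hS : S.Nonempty := hex
    obtain ⟨v, hv, hmin⟩ := Set.exists_min_image S wt (Set.toFinite S) hS
    have him : ∀ i ≤ k, (Function.update g k v) '' Set.Iio i = g '' Set.Iio i := by
      intro i hi
      apply Set.image_congr
      intro j hj
      have : j < i := hj
      exact Function.update_of_ne (by omega) _ _
    refine ⟨Function.update g k v, fun i hi => ?_⟩
    rw [him i (by omega)]
    rcases Nat.lt_succ_iff_lt_or_eq.mp hi with h | rfl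
    · rw [Function.update_of_ne (by omega)]
      exact hg i h
    · rw [Function.update_self]
      exact ⟨hv.1, hv.2, fun w hw hw' => hmin w ⟨hw, hw'⟩⟩

/-- every `𝔽₂`-subspace of `P_n` admits a weight-optimal generating set. -/
theorem exists_weightOptimal_basis (n : ℕ) (G : Submodule (ZMod 2) (Pauli n)) :
    ∃ g : Fin (Module.finrank (ZMod 2) ↥G) → Pauli n, IsWeightOptimalBasis G g := by
  obtain ⟨g, hg⟩ := greedy_seq G _ le_rfl
  generalize hr : Module.finrank (ZMod 2) ↥G = r at hg ⊢
  have hli : ∀ k ≤ r, LinearIndepOn (ZMod 2) g (Set.Iio k) := by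
    intro k
    induction k with
    | zero => intro _; simp
    | succ k ih =>
      intro hk
      have e : Set.Iio (k + 1) = insert k (Set.Iio k) := by
        ext x; simp only [Set.mem_Iio, Set.mem_insert_iff]; omega
      rw [e]
      exact (ih (by omega)).insert (hg k (by omega)).2.1
  have hLI : LinearIndependent (ZMod 2) (fun i : Fin r => g i) :=
    (hli r le_rfl).comp (fun i : Fin r => (⟨i, i.2⟩ : Set.Iio r))
      (fun a b h => Fin.ext (congrArg (fun x : Set.Iio r => (x : ℕ)) h))
  refine ⟨fun i => g i, ⟨hLI, ?_⟩, ?_, ?_⟩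
  · apply Submodule.eq_of_le_of_finrank_eq
    · rw [Submodule.span_le]
      rintro _ ⟨i, rfl⟩
      exact (hg i i.2).1
    · have h1 := finrank_span_eq_card hLI
      rw [Fintype.card_fin] at h1
      exact h1.trans hr.symm
  · intro i j hij
    refine (hg i i.2).2.2 _ (hg j j.2).1 (fun hmem => (hg j j.2).2.1 ?_)
    have hij' : (i : ℕ) ≤ (j : ℕ) := hij
    have hsub : g '' Set.Iio (i : ℕ) ⊆ g '' Set.Iio (j : ℕ) :=
      Set.image_mono (Set.Iio_subset_Iio hij')
    exact Submodule.span_mono hsub hmem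
  · intro h hb hm i
    by_contra! hlt
    have hin : ∀ j ≤ i, h j ∈ Submodule.span (ZMod 2) (g '' Set.Iio (i : ℕ)) := by
      intro j hj
      by_contra hn
      have hG : h j ∈ G := hb.2 ▸ Submodule.subset_span ⟨j, rfl⟩
      have h1 := (hg i i.2).2.2 _ hG hn
      have h2 : wt (h j) ≤ wt (h i) := hm hj
      omega
    have hLI' : LinearIndependent (ZMod 2)
        (fun j : Fin ((i : ℕ) + 1) => h ⟨j, by omega⟩) :=
      hb.1.comp (fun j : Fin ((i : ℕ) + 1) => (⟨j, by omega⟩ : Fin r))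
        (fun a b h => Fin.ext (by simpa using h))
    have h1 := finrank_span_eq_card hLI'
    have h2 : Submodule.span (ZMod 2)
        (Set.range (fun j : Fin ((i : ℕ) + 1) => h ⟨j, by omega⟩)) ≤
        Submodule.span (ZMod 2) (g '' Set.Iio (i : ℕ)) := by
      rw [Submodule.span_le]
      rintro _ ⟨j, rfl⟩
      exact hin _ (Fin.le_def.mpr (by simp; omega))
    have h3 := Submodule.finrank_mono h2
    have h4 := span_Iio_le g i
    rw [Fintype.card_fin] at h1
    have h5 : (i : ℕ) + 1 ≤ (i : ℕ) := h1.symm.le.trans (h3.trans h4)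
    omega

end
end

section
/- Every stabilizer group G ⊆ P_12 of dimension 5 (i.e., on n = 12 qubits with k = 7 logical qubits) with distance d(G) ≥ 2 satisfies W(G) ≥ 6. In particular, W_opt(12, 7, 2) ≥ 6: there is no [[12,7,2]] stabilizer code all of whose checks can be chosen with weight at most 5. -/
open scoped Classical

noncomputable section

variable {ι : Type} [Fintype ι]

def frm (p q : ZMod 2 × ZMod 2) : ZMod 2 := p.1 * q.2 + p.2 * q.1

lemma frm_self (p : ZMod 2 × ZMod 2) : frm p p = 0 := by
  revert p; decide

lemma frm_zero_left (p : ZMod 2 × ZMod 2) : frm 0 p = 0 := by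
  revert p; decide

lemma frm_zero_right (p : ZMod 2 × ZMod 2) : frm p 0 = 0 := by
  revert p; decide

lemma sympl_single (i : Fin 12) (p : ZMod 2 × ZMod 2) (g : Pauli 12) :
    sympl (Pi.single i p : Pauli 12) g = frm p (g i) := by
  unfold sympl
  rw [Finset.sum_eq_single i]
  · simp [frm]
  · intro j _ hj
    simp [Pi.single_eq_of_ne hj]
  · simp

lemma wt_single (i : Fin 12) (p : ZMod 2 × ZMod 2) :
    wt (Pi.single i p : Pauli 12) ≤ 1 := by
  unfold wt
  refine (Finset.card_le_card (t := {i}) ?_).trans (by simp)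
  intro j hj
  simp only [Finset.mem_filter, Finset.mem_univ, true_and] at hj
  by_contra h
  simp only [Finset.mem_singleton] at h
  exact hj (by simp [h])

def linF (p : ZMod 2 × ZMod 2) (i : Fin 12) : Pauli 12 →ₗ[ZMod 2] ZMod 2 where
  toFun g := frm p (g i)
  map_add' x y := by simp [frm]; ring
  map_smul' c x := by simp [frm]; ring

/-- combinatorial part: `B` generates, no weight one elements. -/
lemma core (B : Finset (Pauli 12)) (hc : B.card = 5) (hw : ∀ b ∈ B, wt b ≤ 5)
    (hs : ∀ b ∈ B, ∀ c ∈ B, sympl b c = 0)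
    (S : Finset (Fin 12))
    (V : Finset (Pauli 12)) (hVB : V ⊆ B) (hVc : V.card = S.card) (hV1 : ∀ b ∈ V, wt b ≤ 1)
    (h1 : ∀ i ∈ S, ∃ b ∈ B, b i ≠ 0)
    (h2 : ∀ i ∉ S, ∀ p : ZMod 2 × ZMod 2, p ≠ 0 → ∃ b ∈ B, frm p (b i) ≠ 0) : False := by
  set col : Fin 12 → ℕ := fun i => (B.filter fun b => b i ≠ 0).card with hcol
  have hdc : ∑ b ∈ B, wt b = ∑ i, col i := by
    simp only [hcol, wt, Finset.card_filter]
    rw [Finset.sum_comm]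
  have hcol1 : ∀ i ∈ S, 1 ≤ col i := by
    intro i hi
    obtain ⟨b, hb, hb'⟩ := h1 i hi
    exact Finset.card_pos.mpr ⟨b, Finset.mem_filter.mpr ⟨hb, hb'⟩⟩
  have hpair : ∀ i ∉ S, ∀ b ∈ B, b i ≠ 0 → ∃ c ∈ B, c i ≠ 0 ∧ c ≠ b ∧ frm (b i) (c i) = 1 := by
    intro i hi b hb hbi
    obtain ⟨c, hc, hci⟩ := h2 i hi _ hbi
    refine ⟨c, hc, ?_, ?_, ?_⟩
    · intro h; rw [h, frm_zero_right] at hci; exact hci rfl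
    · intro h; rw [h, frm_self] at hci; exact hci rfl
    · revert hci; generalize frm (b i) (c i) = z; revert z; decide
  have hcol2 : ∀ i ∉ S, 2 ≤ col i := by
    intro i hi
    obtain ⟨b, hb, hb'⟩ := h2 i hi (1, 0) (by decide)
    have hbi : b i ≠ 0 := by
      intro h; rw [h, frm_zero_right] at hb'; exact hb' rfl
    obtain ⟨c, hc, hci, hcb, -⟩ := hpair i hi b hb hbi
    exact Finset.one_lt_card.mpr ⟨b, Finset.mem_filter.mpr ⟨hb, hbi⟩, c,
      Finset.mem_filter.mpr ⟨hc, hci⟩, hcb.symm⟩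
  have hlow : 24 ≤ ∑ i, col i + S.card := by
    have : ∑ i : Fin 12, 2 ≤ ∑ i, (col i + if i ∈ S then 1 else 0) := by
      refine Finset.sum_le_sum fun i _ => ?_
      split_ifs with h
      · have := hcol1 i h; omega
      · exact hcol2 i h
    rw [Finset.sum_add_distrib] at this
    simpa using this
  have hup : ∑ b ∈ B, wt b + 4 * S.card ≤ 25 := by
    have e : ∑ b ∈ B \ V, wt b + ∑ b ∈ V, wt b = ∑ b ∈ B, wt b := Finset.sum_sdiff hVB
    have e1 : ∑ b ∈ V, wt b ≤ V.card * 1 := Finset.sum_le_card_nsmul _ _ _ hV1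
    have e2 : ∑ b ∈ B \ V, wt b ≤ (B \ V).card * 5 :=
      Finset.sum_le_card_nsmul _ _ _ fun b hb => hw b (Finset.mem_sdiff.mp hb).1
    have e3 := Finset.card_sdiff_add_card_eq_card hVB
    omega
  have hS0 : S.card = 0 := by omega
  have hS : ∀ i, i ∉ S := by
    rw [Finset.card_eq_zero] at hS0; simp [hS0]
  have hgood : ∀ d ∈ B, (∀ i, d i ≠ 0 → col i = 2) → wt d ≤ 4 := by
    intro d hd hd2
    have hz : ((wt d : ℕ) : ZMod 2) = 0 := by
      have : ((wt d : ℕ) : ZMod 2) = ∑ c ∈ B, sympl d c := by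
        unfold wt sympl
        rw [Finset.sum_comm, Finset.card_filter, Nat.cast_sum]
        refine Finset.sum_congr rfl fun i _ => ?_
        change _ = ∑ c ∈ B, frm (d i) (c i)
        by_cases hdi : d i = 0
        · simp [hdi, frm_zero_left]
        · obtain ⟨c, hcB, hci, hcd, hf⟩ := hpair i (hS i) d hd hdi
          have hsub : ({d, c} : Finset (Pauli 12)) = B.filter fun b => b i ≠ 0 := by
            refine Finset.eq_of_subset_of_card_le ?_ ?_
            · intro x hx
              simp only [Finset.mem_insert, Finset.mem_singleton] at hx
              rcases hx with rfl | rfl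
              · exact Finset.mem_filter.mpr ⟨hd, hdi⟩
              · exact Finset.mem_filter.mpr ⟨hcB, hci⟩
            · rw [Finset.card_pair hcd.symm]; exact (hd2 i hdi).le
          rw [← Finset.sum_subset (s₁ := {d, c}), Finset.sum_pair hcd.symm, frm_self, hf]
          · simp [hdi]
          · rw [hsub]; exact Finset.filter_subset _ _
          · intro x hx hx'
            rw [hsub] at hx'
            have : x i = 0 := by
              by_contra h; exact hx' (Finset.mem_filter.mpr ⟨hx, h⟩)
            rw [this, frm_zero_right]
      rw [this]
      exact Finset.sum_eq_zero fun c hc => hs d hd c hc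
    rw [ZMod.natCast_eq_zero_iff] at hz
    have := hw d hd
    omega
  obtain ⟨i0, hi0⟩ : ∃ i0, ∀ i, i ≠ i0 → col i = 2 := by
    by_cases h : ∃ i0, col i0 ≠ 2
    · obtain ⟨i0, h0⟩ := h
      refine ⟨i0, fun i hi => ?_⟩
      by_contra hne
      have a0 := hcol2 i0 (hS _)
      have a1 := hcol2 i (hS _)
      have : ∑ j : Fin 12, (2 + ((if j = i then 1 else 0) + if j = i0 then 1 else 0))
          ≤ ∑ j, col j := by
        refine Finset.sum_le_sum fun j _ => ?_
        have a2 := hcol2 j (hS _)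
        split_ifs with q1 q2 q2
        · exact absurd (q1.symm.trans q2) hi
        · subst q1; omega
        · subst q2; omega
        · omega
      simp [Finset.sum_add_distrib] at this
      omega
    · push Not at h
      exact ⟨0, fun i _ => h i⟩
  have hi03 : col i0 ≤ 3 := by
    have : ∑ j : Fin 12, (2 + (if j = i0 then (col i0 - 2) else 0)) ≤ ∑ j, col j := by
      refine Finset.sum_le_sum fun j _ => ?_
      have a2 := hcol2 j (hS _)
      split_ifs with q1
      · subst q1; omega
      · omega
    simp [Finset.sum_add_distrib] at this
    omega
  have e1 := Finset.sum_filter_add_sum_filter_not B (fun b => b i0 ≠ 0) wt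
  have e2 : ∑ b ∈ B.filter (fun b => b i0 ≠ 0), wt b ≤ col i0 * 5 :=
    Finset.sum_le_card_nsmul _ _ _ fun b hb => hw b (Finset.mem_filter.mp hb).1
  have e3 : ∑ b ∈ B.filter (fun b => ¬ b i0 ≠ 0), wt b
      ≤ (B.filter (fun b => ¬ b i0 ≠ 0)).card * 4 :=
    Finset.sum_le_card_nsmul _ _ _ fun b hb => by
      obtain ⟨hb, hb0⟩ := Finset.mem_filter.mp hb
      refine hgood b hb fun i hi => hi0 i ?_
      rintro rfl
      exact hb0 hi
  have e4 : col i0 + (B.filter (fun b => ¬ b i0 ≠ 0)).card = B.card :=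
    Finset.card_filter_add_card_filter_not (s := B) (fun b => b i0 ≠ 0)
  omega

lemma part1 (G : Submodule (ZMod 2) (Pauli 12)) (hG : IsStabilizer G)
    (hr : Module.finrank (ZMod 2) ↥G = 5) (hd : 2 ≤ distG G) : 6 ≤ Wgt G := by
  unfold Wgt
  refine le_iInf fun r => le_iInf fun g => le_iInf fun hg => ?_
  by_contra hlt
  rw [not_le] at hlt
  have hwg : ∀ j, wt (g j) ≤ 5 := by
    intro j
    have h : ((wt (g j) : ℕ) : ℕ∞) < 6 :=
      lt_of_le_of_lt (Finset.le_sup (f := fun i => (wt (g i) : ℕ∞)) (Finset.mem_univ j)) hlt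
    have h' : wt (g j) < 6 := by exact_mod_cast h
    omega
  obtain ⟨-, hspan⟩ := hg
  have hdist : ∀ v, inDual G v → wt v ≤ 1 → v ∈ G := by
    intro v hv hw
    by_contra hvG
    have : (2 : ℕ∞) ≤ (wt v : ℕ∞) := hd.trans (sInf_le ⟨v, ⟨hv, hvG⟩, rfl⟩)
    have : 2 ≤ wt v := by exact_mod_cast this
    omega
  set S : Finset (Fin 12) :=
    Finset.univ.filter fun i => ∃ p : ZMod 2 × ZMod 2, p ≠ 0 ∧ (Pi.single i p : Pauli 12) ∈ G with hS
  have hSp : ∀ i : S, ∃ p : ZMod 2 × ZMod 2, p ≠ 0 ∧ (Pi.single (i : Fin 12) p : Pauli 12) ∈ G :=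
    fun i => (Finset.mem_filter.mp i.2).2
  choose p hp0 hpG using hSp
  set v : S → Pauli 12 := fun i => Pi.single (i : Fin 12) (p i) with hv
  have hvli : LinearIndependent (ZMod 2) v := by
    rw [Fintype.linearIndependent_iff]
    intro c hc i
    have := congrFun hc i
    rw [Finset.sum_apply, Finset.sum_eq_single i] at this
    · simp only [hv, Pi.smul_apply, Pi.single_eq_same, Pi.zero_apply, smul_eq_zero] at this
      exact this.resolve_right (hp0 i)
    · intro j _ hj
      have : (i : Fin 12) ≠ j := fun h => hj (Subtype.ext h.symm)
      simp [hv, Pi.single_eq_of_ne this]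
    · simp
  obtain ⟨b, hbt, hsb, htb, hbli⟩ := exists_linearIndepOn_id_extension
    (hvli.linearIndepOn_id) (Set.subset_union_left (t := Set.range g))
  have hbspan : Submodule.span (ZMod 2) b = G := by
    apply le_antisymm
    · rw [Submodule.span_le]
      refine hbt.trans (Set.union_subset ?_ ?_)
      · rintro _ ⟨i, rfl⟩; exact hpG i
      · rw [← hspan]; exact Submodule.subset_span
    · rw [← hspan, Submodule.span_le]
      exact Set.subset_union_right.trans htb
  have hbfin : b.Finite := Set.toFinite b
  set B := hbfin.toFinset with hB
  have hBb : ∀ x, x ∈ B ↔ x ∈ b := fun x => hbfin.mem_toFinset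
  have hBG : ∀ x ∈ B, x ∈ G := fun x hx => by
    rw [← hbspan]; exact Submodule.subset_span ((hBb x).mp hx)
  have hcard : B.card = 5 := by
    have hcoe : (B : Set (Pauli 12)) = b := hbfin.coe_toFinset
    have h := finrank_span_finset_eq_card (R := ZMod 2) (s := B) (by
      rw [← hcoe] at hbli; exact hbli)
    rw [hcoe, hbspan, hr] at h
    exact h.symm
  have hvB : ∀ i, v i ∈ B := fun i => (hBb _).mpr (hsb ⟨i, rfl⟩)
  refine core B hcard ?_ (fun x hx y hy => hG x (hBG x hx) y (hBG y hy)) S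
    (Finset.univ.image v) ?_ ?_ ?_ ?_ ?_
  · intro x hx
    rcases hbt ((hBb x).mp hx) with ⟨i, rfl⟩ | ⟨j, rfl⟩
    · exact (wt_single _ _).trans (by norm_num)
    · exact hwg j
  · intro x hx
    obtain ⟨i, -, rfl⟩ := Finset.mem_image.mp hx
    exact hvB i
  · rw [Finset.card_image_of_injective _ hvli.injective]; simp
  · intro x hx
    obtain ⟨i, -, rfl⟩ := Finset.mem_image.mp hx
    exact wt_single _ _
  · intro i hi
    refine ⟨v ⟨i, hi⟩, hvB _, ?_⟩
    simpa [hv] using hp0 ⟨i, hi⟩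
  · intro i hi q hq
    by_contra hcon
    push Not at hcon
    apply hi
    refine Finset.mem_filter.mpr ⟨Finset.mem_univ _, q, hq, hdist _ ?_ (wt_single _ _)⟩
    intro x hx
    rw [sympl_single]
    have hle : Submodule.span (ZMod 2) b ≤ LinearMap.ker (linF q i) := by
      rw [Submodule.span_le]
      intro y hy
      exact hcon y ((hBb y).mpr hy)
    rw [hbspan] at hle
    exact hle hx

/-- every stabilizer group on `12` qubits of dimension `5` with distance
at least `2` has weight at least `6`; in particular `W_opt(12,7,2) ≥ 6`. -/
theorem Wopt_12_7_2_lower_bound :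
    (∀ G : Submodule (ZMod 2) (Pauli 12), IsStabilizer G →
        Module.finrank (ZMod 2) ↥G = 5 → 2 ≤ distG G → 6 ≤ Wgt G) ∧
    6 ≤ Wopt 12 7 2 := by
  refine ⟨part1, ?_⟩
  unfold Wopt
  refine le_iInf fun G => le_iInf fun h => ?_
  exact part1 G h.1 h.2.1 h.2.2.ge

end
end

section
/- Let G ⊆ P_n be a stabilizer group with parameters [[n,k,d;w]] where k ≥ 1 and d(G) ≥ 2, and let t := A₁(G) be the number of weight-1 elements of G. Then there exists a stabilizer group G' ⊆ P_{n−t} with parameters [[n−t, k, d; w]] and with A₁(G') = 0 (G' contains no weight-1 element). -/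
open scoped Classical

noncomputable section

variable {ι : Type} [Fintype ι]

theorem aux_pair (x a : ZMod 2 × ZMod 2) (ha : a ≠ 0) (h : x.1 * a.2 + x.2 * a.1 = 0) :
    ∃ c : ZMod 2, x = c • a := by
  revert x a; decide

theorem sympl_single_s11 (u : PauliT ι) (i : ι) (a : ZMod 2 × ZMod 2) :
    sympl u (Pi.single i a) = (u i).1 * a.2 + (u i).2 * a.1 := by
  unfold sympl
  rw [Finset.sum_eq_single i]
  · simp
  · intro j _ hj
    simp [Pi.single_eq_of_ne hj]
  · simp

theorem wt_single_s11 (i : ι) (a : ZMod 2 × ZMod 2) (ha : a ≠ 0) :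
    wt (Pi.single i a : PauliT ι) = 1 := by
  unfold wt
  rw [Finset.card_eq_one]
  refine ⟨i, ?_⟩
  ext j
  by_cases hj : j = i
  · subst hj; simp [ha]
  · simp [hj]

theorem wt_one (g : PauliT ι) (h : wt g = 1) :
    ∃ (i : ι) (a : ZMod 2 × ZMod 2), a ≠ 0 ∧ g = Pi.single i a := by
  unfold wt at h
  rw [Finset.card_eq_one] at h
  obtain ⟨i, hi⟩ := h
  have hh : ∀ j, g j ≠ 0 ↔ j = i := by
    intro j
    have := Finset.ext_iff.1 hi j
    simpa using this
  refine ⟨i, g i, (hh i).2 rfl, ?_⟩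
  ext1 j
  by_cases hj : j = i
  · subst hj; simp
  · rw [Pi.single_eq_of_ne hj]
    by_contra hc
    exact hj ((hh j).1 hc)

theorem Wgt_le_iff (G : Submodule (ZMod 2) (PauliT ι)) (w : ℕ∞) :
    Wgt G ≤ w ↔ G ≤ Submodule.span (ZMod 2) {g | g ∈ G ∧ (wt g : ℕ∞) ≤ w} := by
  constructor
  · intro h
    by_cases hw : w = ⊤
    · subst hw
      intro g hg
      exact Submodule.subset_span ⟨hg, le_top⟩
    · have h2 : Wgt G < w + 1 := lt_of_le_of_lt h ((ENat.lt_add_one_iff hw).2 le_rfl)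
      unfold Wgt at h2
      simp only [iInf_lt_iff] at h2
      obtain ⟨r, g, hg, hlt⟩ := h2
      have hle := (ENat.lt_add_one_iff hw).1 hlt
      conv_lhs => rw [← hg.2]
      apply Submodule.span_mono
      rintro _ ⟨i, rfl⟩
      refine ⟨?_, ?_⟩
      · rw [← hg.2]; exact Submodule.subset_span ⟨i, rfl⟩
      · exact le_trans (Finset.le_sup (f := fun i => (wt (g i) : ℕ∞)) (Finset.mem_univ i)) hle
  · intro h
    obtain ⟨b, hb, hspan, hli⟩ := exists_linearIndependent (ZMod 2)
      {g : PauliT ι | g ∈ G ∧ (wt g : ℕ∞) ≤ w}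
    have hfin : Finite b := Set.toFinite b
    obtain ⟨r, ⟨e⟩⟩ := Finite.exists_equiv_fin b
    have hB : IsBasisFam G (fun i : Fin r => (e.symm i : PauliT ι)) := by
      refine ⟨hli.comp _ e.symm.injective, ?_⟩
      have : Set.range (fun i : Fin r => (e.symm i : PauliT ι)) = b := by
        ext x
        constructor
        · rintro ⟨i, rfl⟩; exact (e.symm i).2
        · intro hx; exact ⟨e ⟨x, hx⟩, by simp⟩
      rw [this, hspan]
      apply le_antisymm _ h
      rw [Submodule.span_le]
      intro x hx; exact hx.1
    unfold Wgt
    refine iInf_le_of_le r (iInf_le_of_le _ (iInf_le_of_le hB ?_))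
    apply Finset.sup_le
    intro i _
    exact (hb (e.symm i).2).2

/-- Extension by zero. -/
def extM {κ : Type} (T : Finset ι) (e : κ ≃ {i : ι // i ∉ T}) :
    PauliT κ →ₗ[ZMod 2] PauliT ι where
  toFun v := fun j => if h : j ∉ T then v (e.symm ⟨j, h⟩) else 0
  map_add' u v := by
    ext1 j
    by_cases h : j ∈ T <;> simp [h]
  map_smul' c v := by
    ext1 j
    by_cases h : j ∈ T <;> simp [h]

/-- Restriction. -/
def resM {κ : Type} (T : Finset ι) (e : κ ≃ {i : ι // i ∉ T}) :
    PauliT ι →ₗ[ZMod 2] PauliT κ where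
  toFun v := fun j => v (e j)
  map_add' u v := rfl
  map_smul' c v := rfl

/-- The part on `T`. -/
def psiM (T : Finset ι) (a : ι → ZMod 2 × ZMod 2) :
    (T → ZMod 2) →ₗ[ZMod 2] PauliT ι where
  toFun c := fun j => if h : j ∈ T then c ⟨j, h⟩ • a j else 0
  map_add' u v := by
    ext1 j
    by_cases h : j ∈ T <;> simp [h, add_smul]
  map_smul' c v := by
    ext1 j
    by_cases h : j ∈ T <;> simp [h, mul_smul]

section ext
variable {κ : Type} [Fintype κ] (T : Finset ι) (e : κ ≃ {i : ι // i ∉ T})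

theorem extM_mem (v : PauliT κ) (j : ι) (h : j ∈ T) : extM T e v j = 0 := by
  simp [extM, h]

theorem extM_e (v : PauliT κ) (j : κ) : extM T e v (e j) = v j := by
  have := (e j).2
  simp [extM, this]

theorem res_ext (v : PauliT κ) : resM T e (extM T e v) = v := by
  ext1 j; exact extM_e T e v j

theorem ext_res (v : PauliT ι) (j : ι) (h : j ∉ T) : extM T e (resM T e v) j = v j := by
  simp [extM, resM, h]

theorem sympl_ext (v : PauliT κ) (u : PauliT ι) :
    sympl (extM T e v) u = sympl v (resM T e u) := by
  unfold sympl
  symm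
  apply Finset.sum_of_injOn (fun j => (e j : ι))
  · intro x _ y _ h; exact e.injective (Subtype.ext h)
  · intro x _; simp
  · intro j _ hj
    have : j ∈ T := by
      by_contra hc
      exact hj ⟨e.symm ⟨j, hc⟩, by simp, by simp⟩
    simp [extM_mem T e v j this]
  · intro j _
    simp only [extM_e]; rfl

theorem wt_res_le (u : PauliT ι) : wt (resM T e u) ≤ wt u := by
  unfold wt
  apply Finset.card_le_card_of_injOn (fun j => (e j : ι))
  · intro j hj
    have hj' := (Finset.mem_filter.1 hj).2
    exact Finset.mem_filter.2 ⟨Finset.mem_univ _, hj'⟩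
  · intro x _ y _ h; exact e.injective (Subtype.ext h)

theorem wt_ext (v : PauliT κ) : wt (extM T e v) = wt v := by
  apply le_antisymm
  · unfold wt
    apply Finset.card_le_card_of_surjOn (fun j => (e j : ι))
    intro j hj
    have hT : j ∉ T := by
      intro hc
      simp [extM_mem T e v j hc] at hj
    refine ⟨e.symm ⟨j, hT⟩, ?_, by simp⟩
    simpa [extM, hT] using hj
  · have := wt_res_le T e (extM T e v)
    rwa [res_ext] at this

variable (a : ι → ZMod 2 × ZMod 2) (G : Submodule (ZMod 2) (PauliT ι))

theorem psi_mem (haG : ∀ i ∈ T, Pi.single i (a i) ∈ G) (c : T → ZMod 2) :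
    psiM T a c ∈ Submodule.span (ZMod 2) {g : PauliT ι | ∃ i ∈ T, g = Pi.single i (a i)} := by
  have : psiM T a c = ∑ i : T, c i • (Pi.single (i : ι) (a i) : PauliT ι) := by
    ext1 j
    rw [Finset.sum_apply]
    by_cases h : j ∈ T
    · rw [Finset.sum_eq_single ⟨j, h⟩]
      · simp [psiM, h]
      · intro b _ hb
        have : j ≠ b := fun hc => hb (Subtype.ext hc.symm)
        simp [Pi.single_eq_of_ne this]
      · simp
    · rw [Finset.sum_eq_zero]
      · simp [psiM, h]
      · intro b _
        have : j ≠ b := fun hc => h (hc ▸ b.2)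
        simp [Pi.single_eq_of_ne this]
  rw [this]
  apply Submodule.sum_mem
  intro i _
  apply Submodule.smul_mem
  exact Submodule.subset_span ⟨i, i.2, rfl⟩

theorem psi_mem_G (haG : ∀ i ∈ T, Pi.single i (a i) ∈ G) (c : T → ZMod 2) :
    psiM T a c ∈ G := by
  have := psi_mem T a G haG c
  refine (Submodule.span_le.2 ?_) this
  rintro _ ⟨i, hi, rfl⟩
  exact haG i hi

theorem decomp (ha : ∀ i ∈ T, a i ≠ 0) (haG : ∀ i ∈ T, Pi.single i (a i) ∈ G)
    (u : PauliT ι) (hu : inDual G u) : ∃ c, u = psiM T a c + extM T e (resM T e u) := by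
  have : ∀ i : T, ∃ c : ZMod 2, u i = c • a i := by
    intro i
    apply aux_pair _ _ (ha i i.2)
    rw [← sympl_single_s11]
    exact hu _ (haG i i.2)
  choose c hc using this
  refine ⟨c, ?_⟩
  ext1 j
  by_cases h : j ∈ T
  · rw [Pi.add_apply, extM_mem T e _ j h, hc ⟨j, h⟩]
    simp [psiM, h]
  · rw [Pi.add_apply, ext_res T e u j h]
    simp [psiM, h]

theorem ext_res_mem (ha : ∀ i ∈ T, a i ≠ 0) (haG : ∀ i ∈ T, Pi.single i (a i) ∈ G)
    (u : PauliT ι) (hu : inDual G u) : extM T e (resM T e u) ∈ G ↔ u ∈ G := by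
  obtain ⟨c, hc⟩ := decomp T e a G ha haG u hu
  conv_rhs => rw [hc]
  exact (Submodule.add_mem_iff_right G (psi_mem_G T a G haG c)).symm

theorem finrank_eq (ha : ∀ i ∈ T, a i ≠ 0) (haG : ∀ i ∈ T, Pi.single i (a i) ∈ G)
    (hG : IsStabilizer G) :
    Module.finrank (ZMod 2) G = T.card + Module.finrank (ZMod 2) (G.comap (extM T e)) := by
  let F : (T → ZMod 2) × (G.comap (extM T e)) →ₗ[ZMod 2] PauliT ι :=
    (psiM T a).coprod ((extM T e).comp (G.comap (extM T e)).subtype)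
  have hinj : Function.Injective F := by
    rw [← LinearMap.ker_eq_bot, LinearMap.ker_eq_bot']
    rintro ⟨c, v⟩ h
    have h' : ∀ j, psiM T a c j + extM T e v.1 j = 0 := fun j => congrFun h j
    ext1
    · ext1 i
      have := h' i
      rw [extM_mem T e _ _ i.2] at this
      simpa [psiM, ha i i.2] using this
    · apply Subtype.ext
      ext1 j
      have := h' (e j)
      rw [extM_e] at this
      simpa [psiM, (e j).2] using this
  have hr : LinearMap.range F = G := by
    apply le_antisymm
    · rintro _ ⟨⟨c, v⟩, rfl⟩
      exact G.add_mem (psi_mem_G T a G haG c) v.2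
    · intro g hg
      have hd : inDual G g := hG g hg
      obtain ⟨c, hc⟩ := decomp T e a G ha haG g hd
      exact ⟨(c, ⟨resM T e g, (ext_res_mem T e a G ha haG g hd).2 hg⟩), hc.symm⟩
  have := LinearMap.finrank_range_of_inj hinj
  rw [hr] at this
  rw [this, Module.finrank_prod]
  simp

theorem dual_iff (ha : ∀ i ∈ T, a i ≠ 0) (haG : ∀ i ∈ T, Pi.single i (a i) ∈ G)
    (hG : IsStabilizer G) (v : PauliT κ) :
    inDual (G.comap (extM T e)) v ↔ inDual G (extM T e v) := by
  constructor
  · intro h g hg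
    rw [sympl_ext]
    exact h _ ((ext_res_mem T e a G ha haG g (hG g hg)).2 hg)
  · intro h g hg
    have := h _ hg
    rwa [sympl_ext, res_ext] at this

theorem dist_eq (ha : ∀ i ∈ T, a i ≠ 0) (haG : ∀ i ∈ T, Pi.single i (a i) ∈ G)
    (hG : IsStabilizer G) : distG (G.comap (extM T e)) = distG G := by
  apply le_antisymm
  · apply le_sInf
    rintro _ ⟨u, ⟨hu, hn⟩, rfl⟩
    refine le_trans (sInf_le ⟨resM T e u, ⟨?_, ?_⟩, rfl⟩) (Nat.cast_le.2 (wt_res_le T e u))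
    · intro g hg
      have h1 : sympl u (extM T e g) = 0 := hu _ hg
      have h2 : ∀ {κ : Type} [Fintype κ] (x y : PauliT κ), sympl x y = sympl y x := by
        intro κ _ x y
        unfold sympl
        apply Finset.sum_congr rfl
        intros; ring
      rw [h2, sympl_ext] at h1
      rw [h2]; exact h1
    · intro hc
      exact hn ((ext_res_mem T e a G ha haG u hu).1 hc)
  · apply le_sInf
    rintro _ ⟨v, ⟨hv, hn⟩, rfl⟩
    refine le_trans (sInf_le ⟨extM T e v, ⟨(dual_iff T e a G ha haG hG v).1 hv, hn⟩, rfl⟩) ?_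
    simp only [wt_ext]; exact le_rfl

theorem wgt_eq (ha : ∀ i ∈ T, a i ≠ 0) (haG : ∀ i ∈ T, Pi.single i (a i) ∈ G)
    (hG : IsStabilizer G) (hne : T.Nonempty → G.comap (extM T e) ≠ ⊥) :
    Wgt (G.comap (extM T e)) = Wgt G := by
  apply le_antisymm
  · rw [Wgt_le_iff]
    have h := (Wgt_le_iff G (Wgt G)).1 le_rfl
    intro v hv
    have h1 := Submodule.mem_map_of_mem (f := resM T e) (h hv)
    rw [res_ext, Submodule.map_span] at h1
    refine Submodule.span_mono ?_ h1
    rintro _ ⟨g, ⟨hg, hw⟩, rfl⟩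
    exact ⟨(ext_res_mem T e a G ha haG g (hG g hg)).2 hg,
      le_trans (Nat.cast_le.2 (wt_res_le T e g)) hw⟩
  · have h := (Wgt_le_iff (G.comap (extM T e)) _).1 le_rfl
    rw [Wgt_le_iff]
    intro g hg
    obtain ⟨c, hc⟩ := decomp T e a G ha haG g (hG g hg)
    rw [hc]
    apply Submodule.add_mem
    · refine Submodule.span_mono ?_ (psi_mem T a G haG c)
      rintro _ ⟨i, hi, rfl⟩
      refine ⟨haG i hi, ?_⟩
      rw [wt_single_s11 _ _ (ha i hi)]
      by_contra hlt
      have h0 : Wgt (G.comap (extM T e)) = 0 := by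
        rw [Nat.cast_one, not_le] at hlt
        exact ENat.lt_one_iff_eq_zero.1 hlt
      apply hne ⟨i, hi⟩
      rw [eq_bot_iff]
      refine h.trans ?_
      rw [Submodule.span_le]
      rintro v ⟨_, hv⟩
      rw [h0] at hv
      have hv0 : wt v = 0 := by simpa using hv
      unfold wt at hv0
      rw [Finset.card_eq_zero] at hv0
      rw [SetLike.mem_coe, Submodule.mem_bot]
      ext1 j
      by_contra hj
      have : j ∈ (∅ : Finset κ) := by rw [← hv0]; simpa using hj
      simp at this
    · have h1 := Submodule.mem_map_of_mem (f := extM T e)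
        (h ((ext_res_mem T e a G ha haG g (hG g hg)).2 hg))
      rw [Submodule.map_span] at h1
      refine Submodule.span_mono ?_ h1
      rintro _ ⟨v, ⟨hv, hw⟩, rfl⟩
      refine ⟨hv, ?_⟩
      rw [wt_ext]; exact hw

theorem aj_eq (ha : ∀ i ∈ T, a i ≠ 0) (haG : ∀ i ∈ T, Pi.single i (a i) ∈ G)
    (hT : ∀ i (b : ZMod 2 × ZMod 2), b ≠ 0 → Pi.single i b ∈ G → i ∈ T)
    (hG : IsStabilizer G) : Aj G 1 = T.card := by
  unfold Aj
  have hTc : T.card = Nat.card T := by simp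
  rw [hTc]
  symm
  apply Nat.card_eq_of_bijective
    (fun i : T => (⟨Pi.single (i : ι) (a i), haG i i.2, wt_single_s11 _ _ (ha i i.2)⟩ :
      {g : PauliT ι // g ∈ G ∧ wt g = 1}))
  constructor
  · intro i j h
    have h1 := congrFun (congrArg Subtype.val h) i
    by_contra hc
    have hne : (i : ι) ≠ j := fun h => hc (Subtype.ext h)
    simp [Pi.single_eq_of_ne hne, ha i i.2] at h1
  · rintro ⟨g, hg, hw⟩
    obtain ⟨i, b, hb, rfl⟩ := wt_one g hw
    have hi := hT i b hb hg
    refine ⟨⟨i, hi⟩, ?_⟩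
    apply Subtype.ext
    have h1 := hG _ hg _ (haG i hi)
    rw [sympl_single_s11, Pi.single_eq_same] at h1
    obtain ⟨c, hc⟩ := aux_pair b (a i) (ha i hi) h1
    have hc1 : c = 1 := by
      have : c = 0 ∨ c = 1 := (by decide : ∀ c : ZMod 2, c = 0 ∨ c = 1) c
      rcases this with h | h
      · subst h; simp at hc; exact absurd hc hb
      · exact h
    subst hc1
    simp [hc]

end ext

theorem remove_core {ι κ : Type} [Fintype ι] [Fintype κ] (n k : ℕ) (d w : ℕ∞) (hk : 1 ≤ k)
    (hd : 2 ≤ d) (hn : Fintype.card ι = n)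
    (G : Submodule (ZMod 2) (PauliT ι)) (hG : IsStabilizer G)
    (hdim : Module.finrank (ZMod 2) ↥G = n - k) (hdist : distG G = d)
    (hW : Wgt G = w) (hκ : Fintype.card κ = n - Aj G 1) :
    ∃ G' : Submodule (ZMod 2) (PauliT κ),
      IsStabilizer G' ∧
      Module.finrank (ZMod 2) ↥G' = (n - Aj G 1) - k ∧
      distG G' = d ∧ Wgt G' = w ∧ Aj G' 1 = 0 := by
  let T : Finset (ι) :=
    Finset.univ.filter fun i => ∃ b : ZMod 2 × ZMod 2, b ≠ 0 ∧ Pi.single i b ∈ G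
  have hex : ∀ i, ∃ b : ZMod 2 × ZMod 2, i ∈ T → b ≠ 0 ∧ Pi.single i b ∈ G := by
    intro i
    by_cases hi : i ∈ T
    · obtain ⟨b, hb⟩ := (Finset.mem_filter.1 hi).2
      exact ⟨b, fun _ => hb⟩
    · exact ⟨0, fun h => absurd h hi⟩
  choose a haa using hex
  have ha : ∀ i ∈ T, a i ≠ 0 := fun i hi => (haa i hi).1
  have haG : ∀ i ∈ T, Pi.single i (a i) ∈ G := fun i hi => (haa i hi).2
  have hT : ∀ i (b : ZMod 2 × ZMod 2), b ≠ 0 → Pi.single i b ∈ G → i ∈ T :=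
    fun i b hb hm => Finset.mem_filter.2 ⟨Finset.mem_univ _, b, hb, hm⟩
  have hA := aj_eq T a G ha haG hT hG
  have hcard : Fintype.card (κ) = Fintype.card {i : ι // i ∉ T} := by
    rw [hκ, hA, Fintype.card_subtype_compl, hn]
    simp
  let e : κ ≃ {i : ι // i ∉ T} := Fintype.equivOfCardEq hcard
  have hfr := finrank_eq T e a G ha haG hG
  have hdist' := dist_eq T e a G ha haG hG
  refine ⟨G.comap (extM T e), ?_, ?_, hdist'.trans hdist, ?_, ?_⟩
  · intro u hu v hv
    have := hG _ hu _ hv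
    rwa [sympl_ext, res_ext] at this
  · omega
  · rw [wgt_eq T e a G ha haG hG, hW]
    intro hne hbot
    have hpos := hne.card_pos
    have h0 : Module.finrank (ZMod 2) (G.comap (extM T e)) = 0 := by
      rw [hbot]; exact finrank_bot _ _
    have hm : 0 < Fintype.card κ := by omega
    obtain ⟨j0⟩ := Fintype.card_pos_iff.1 hm
    have hd1 : distG (G.comap (extM T e)) ≤ 1 := by
      have hne1 : ((1, 0) : ZMod 2 × ZMod 2) ≠ 0 := by decide
      refine sInf_le ⟨Pi.single j0 (1, 0), ⟨?_, ?_⟩, ?_⟩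
      · intro g hg
        rw [hbot, Submodule.mem_bot] at hg
        subst hg
        simp [sympl]
      · rw [hbot, Submodule.mem_bot]
        intro hc
        have := congrFun hc j0
        rw [Pi.single_eq_same] at this
        exact hne1 this
      · simp only [wt_single_s11 _ _ hne1]; rfl
    rw [hdist', hdist] at hd1
    exact absurd (hd.trans hd1) (by decide)
  · unfold Aj
    rw [Nat.card_eq_zero]
    left
    refine ⟨?_⟩
    rintro ⟨v, hv, hw⟩
    have hw' : wt (extM T e v) = 1 := by rw [wt_ext, hw]
    obtain ⟨i, b, hb, hs⟩ := wt_one _ hw'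
    have hv' : extM T e v ∈ G := hv
    have hi : i ∈ T := hT i b hb (hs ▸ hv')
    have h0 := extM_mem T e v i hi
    rw [hs, Pi.single_eq_same] at h0
    exact hb h0

/-- removing the `t = A₁(G)` weight-one checks of an `[[n,k,d;w]]` code
(`k ≥ 1`, `d ≥ 2`) yields an `[[n-t,k,d;w]]` code with no weight-one stabilizer. -/
theorem remove_weight_one_elements (n k : ℕ) (d w : ℕ∞) (hk : 1 ≤ k) (hd : 2 ≤ d)
    (G : Submodule (ZMod 2) (Pauli n)) (hG : IsStabilizer G)
    (hdim : Module.finrank (ZMod 2) ↥G = n - k) (hdist : distG G = d)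
    (hW : Wgt G = w) :
    ∃ G' : Submodule (ZMod 2) (Pauli (n - Aj G 1)),
      IsStabilizer G' ∧
      Module.finrank (ZMod 2) ↥G' = (n - Aj G 1) - k ∧
      distG G' = d ∧ Wgt G' = w ∧ Aj G' 1 = 0 := by
  exact remove_core n k d w hk hd (Fintype.card_fin n) G hG hdim hdist hW (Fintype.card_fin _)

end
end

section
/- Let k ≥ 1 and let G ⊆ P_n be a stabilizer group of dimension n − k with distance d(G) = d, admitting an 𝔽₂-basis S = {g_1, …, g_{n−k}} with wt(g_i) ≤ w for all i. Suppose for some 1 ≤ T < n − k there exist T elements g_{i_1}, …, g_{i_T} of S with |supp(g_{i_1}) ∪ … ∪ supp(g_{i_T})| = T. Then there is a partition of Fin n into a T-element set A and its complement B such that, under the induced identification P_n ≅ P_A × P_B, G decomposes as a tensor product G_A ⊗ G_B, where G_A ⊆ P_A is a T-dimensional isotropic subspace (so d(G_A) = ⊤ and it is a [[T,0]] code) with W(G_A) ≤ w, and G_B ⊆ P_B is a stabilizer group of dimension (n−T) − k with d(G_B) = d and W(G_B) ≤ w. -/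
open scoped Classical

noncomputable section

variable {ι : Type} [Fintype ι]

def dcgB (κ : Type) [Fintype κ] : LinearMap.BilinForm (ZMod 2) (PauliT κ) :=
  LinearMap.mk₂ (ZMod 2) sympl
    (by intro a b c; simp only [sympl, ← Finset.sum_add_distrib]
        refine Finset.sum_congr rfl fun i _ => ?_
        simp; ring)
    (by intro r a b; simp only [sympl, smul_eq_mul, Finset.mul_sum]
        refine Finset.sum_congr rfl fun i _ => ?_
        simp; ring)
    (by intro a b c; simp only [sympl, ← Finset.sum_add_distrib]
        refine Finset.sum_congr rfl fun i _ => ?_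
        simp; ring)
    (by intro r a b; simp only [sympl, smul_eq_mul, Finset.mul_sum]
        refine Finset.sum_congr rfl fun i _ => ?_
        simp; ring)

theorem dcg_comm {κ : Type} [Fintype κ] (u v : PauliT κ) : sympl u v = sympl v u := by
  simp only [sympl]
  refine Finset.sum_congr rfl fun i _ => ?_
  ring

theorem dcgB_apply {κ : Type} [Fintype κ] (u v : PauliT κ) : dcgB κ u v = sympl u v := rfl

theorem dcgB_refl (κ : Type) [Fintype κ] : (dcgB κ).IsRefl := by
  intro u v h
  rw [dcgB_apply] at *
  rw [dcg_comm]; exact h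

theorem dcg_nd {κ : Type} [Fintype κ] (u : PauliT κ) (h : ∀ v, sympl u v = 0) : u = 0 := by
  funext i
  have h1 := h (Pi.single i (0, 1))
  have h2 := h (Pi.single i (1, 0))
  simp only [sympl] at h1 h2
  rw [Finset.sum_eq_single i (by intro b _ hb; simp [Pi.single_eq_of_ne hb]) (by simp)] at h1 h2
  simp at h1 h2
  exact Prod.ext h1 h2

theorem dcgB_nd (κ : Type) [Fintype κ] : (dcgB κ).Nondegenerate := by
  constructor
  · intro u h
    exact dcg_nd u h
  · intro u h
    exact dcg_nd u fun v => by rw [dcg_comm]; exact h v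

theorem dcg_zero {κ : Type} [Fintype κ] (u : PauliT κ) : sympl u 0 = 0 := by
  simp [sympl]

theorem dcg_zero' {κ : Type} [Fintype κ] (u : PauliT κ) : sympl 0 u = 0 := by
  simp [sympl]

theorem dcg_lagrangian {κ : Type} [Fintype κ] (G : Submodule (ZMod 2) (PauliT κ))
    (hG : IsStabilizer G) (hd : Module.finrank (ZMod 2) G = Fintype.card κ)
    (v : PauliT κ) (hv : inDual G v) : v ∈ G := by
  have hle : G ≤ (dcgB κ).orthogonal G := by
    intro x hx y hy
    exact hG y hy x hx
  have h1 := LinearMap.BilinForm.finrank_orthogonal (dcgB_nd κ) G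
  have h2 : Module.finrank (ZMod 2) (PauliT κ) = 2 * Fintype.card κ := by
    rw [Module.finrank_pi_fintype]
    simp; ring
  have h3 : G = (dcgB κ).orthogonal G := by
    apply Submodule.eq_of_le_of_finrank_eq hle
    rw [h1, h2, hd]; omega
  rw [h3]
  intro y hy
  show sympl y v = 0
  rw [dcg_comm]; exact hv y hy

theorem dcg_sympl (p : ι → Prop) [Fintype {x // p x}] [Fintype {x // ¬ p x}] (u v : PauliT ι) :
    sympl u v = sympl (splitEquiv p u).1 (splitEquiv p v).1 +
      sympl (splitEquiv p u).2 (splitEquiv p v).2 := by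
  have h := Fintype.sum_subtype_add_sum_subtype p
    (fun i => (u i).1 * (v i).2 + (u i).2 * (v i).1)
  simp only [sympl]
  convert h.symm <;> rfl

theorem dcg_wt (p : ι → Prop) [Fintype {x // p x}] [Fintype {x // ¬ p x}] (u : PauliT ι) :
    wt u = wt (splitEquiv p u).1 + wt (splitEquiv p u).2 := by
  have h := Fintype.sum_subtype_add_sum_subtype p
    (fun i => if u i ≠ 0 then 1 else 0)
  simp only [wt, Finset.card_filter]
  convert h.symm <;> rfl

def dcg_prodEquiv {V W : Type} [AddCommGroup V] [Module (ZMod 2) V] [AddCommGroup W]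
    [Module (ZMod 2) W] (P : Submodule (ZMod 2) V) (Q : Submodule (ZMod 2) W) :
    (P.prod Q) ≃ₗ[ZMod 2] P × Q where
  toFun x := (⟨x.1.1, x.2.1⟩, ⟨x.1.2, x.2.2⟩)
  invFun x := ⟨(x.1.1, x.2.1), x.1.2, x.2.2⟩
  left_inv _ := rfl
  right_inv _ := rfl
  map_add' _ _ := rfl
  map_smul' _ _ := rfl

theorem dcg_wt_zero {κ : Type} [Fintype κ] : wt (0 : PauliT κ) = 0 := by
  simp [wt]

theorem dcg_Wgt {κ : Type} [Fintype κ] (s : Set (PauliT κ)) (w : ℕ) (hw : ∀ x ∈ s, wt x ≤ w)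
    (G : Submodule (ZMod 2) (PauliT κ)) (hs : Submodule.span (ZMod 2) s = G) :
    Wgt G ≤ (w : ℕ∞) := by
  obtain ⟨b, hbs, hspan, hli⟩ := exists_linearIndependent (ZMod 2) s
  have : Finite b := Set.toFinite b
  have e := Finite.equivFin b
  have hb : IsBasisFam G (fun i => ((e.symm i : b) : PauliT κ)) := by
    refine ⟨hli.comp _ e.symm.injective, ?_⟩
    rw [← hs, ← hspan]
    congr 1
    ext x
    constructor
    · rintro ⟨i, rfl⟩; exact (e.symm i).2
    · intro hx; exact ⟨e ⟨x, hx⟩, congrArg Subtype.val (e.symm_apply_apply ⟨x, hx⟩)⟩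
  refine le_trans (iInf_le_of_le _ (iInf_le_of_le _ (iInf_le_of_le hb le_rfl))) ?_
  refine Finset.sup_le fun i _ => ?_
  exact_mod_cast hw _ (hbs (e.symm i).2)

/-- if `T` generators (out of a bounded-weight basis) are jointly supported
on exactly `T` qubits, the code factorizes as a `[[T,0]]` code tensored with an
`[[n-T, k, d]]` code, both of weight at most `w`. -/
theorem discard_complete_generators (n k T : ℕ) (d : ℕ∞) (w : ℕ) (hk : 1 ≤ k)
    (G : Submodule (ZMod 2) (Pauli n)) (hG : IsStabilizer G)
    (hdim : Module.finrank (ZMod 2) ↥G = n - k) (hdist : distG G = d)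
    (g : Fin (n - k) → Pauli n) (hbasis : IsBasisFam G g)
    (hw : ∀ i, wt (g i) ≤ w)
    (hT1 : 1 ≤ T) (hT2 : T < n - k)
    (I : Finset (Fin (n - k))) (hI : I.card = T)
    (hsupp : (I.biUnion fun i => suppF (g i)).card = T) :
    ∃ A : Finset (Fin n), A.card = T ∧
      ∃ (GA : Submodule (ZMod 2) (PauliT {x : Fin n // x ∈ A}))
        (GB : Submodule (ZMod 2) (PauliT {x : Fin n // ¬ x ∈ A})),
        G = tensorAlong (fun x => x ∈ A) GA GB ∧
        IsStabilizer GA ∧ Module.finrank (ZMod 2) ↥GA = T ∧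
        distG GA = ⊤ ∧ Wgt GA ≤ (w : ℕ∞) ∧
        IsStabilizer GB ∧ Module.finrank (ZMod 2) ↥GB = (n - T) - k ∧
        distG GB = d ∧ Wgt GB ≤ (w : ℕ∞) := by
  obtain ⟨hli, hspan⟩ := hbasis
  set A := I.biUnion fun i => suppF (g i) with hA
  refine ⟨A, hsupp, ?_⟩
  set p : Fin n → Prop := fun x => x ∈ A with hp
  have hgG : ∀ i, g i ∈ G := fun i => hspan ▸ Submodule.subset_span ⟨i, rfl⟩
  have hg2 : ∀ i ∈ I, (splitEquiv p (g i)).2 = 0 := by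
    intro i hi
    funext x
    by_contra hx
    apply x.2
    show x.1 ∈ A
    rw [hA, Finset.mem_biUnion]
    exact ⟨i, hi, Finset.mem_filter.2 ⟨Finset.mem_univ _, hx⟩⟩
  let ra : Pauli n →ₗ[ZMod 2] PauliT {x // p x} :=
    (LinearMap.fst _ _ _).comp (splitEquiv p).toLinearMap
  let rb : Pauli n →ₗ[ZMod 2] PauliT {x // ¬ p x} :=
    (LinearMap.snd _ _ _).comp (splitEquiv p).toLinearMap
  let ea : PauliT {x // p x} →ₗ[ZMod 2] Pauli n :=
    (splitEquiv p).symm.toLinearMap.comp (LinearMap.inl _ _ _)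
  let eb : PauliT {x // ¬ p x} →ₗ[ZMod 2] Pauli n :=
    (splitEquiv p).symm.toLinearMap.comp (LinearMap.inr _ _ _)
  have sa : ∀ a, splitEquiv p (ea a) = (a, 0) := fun a => (splitEquiv p).apply_symm_apply _
  have sb : ∀ b, splitEquiv p (eb b) = (0, b) := fun b => (splitEquiv p).apply_symm_apply _
  have hab : ∀ v, v = ea (ra v) + eb (rb v) := by
    intro v
    apply (splitEquiv p).injective
    rw [map_add, sa, sb]
    simp [ra, rb]
  have hea : ∀ i ∈ I, ea (ra (g i)) = g i := by
    intro i hi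
    apply (splitEquiv p).injective
    rw [sa]
    exact Prod.ext rfl (hg2 i hi).symm
  let f : I → PauliT {x // p x} := fun i => ra (g i)
  have hfli : LinearIndependent (ZMod 2) f := by
    apply LinearIndependent.of_comp ea
    have : (ea ∘ f) = g ∘ (Subtype.val : I → _) := by
      funext i
      exact hea i i.2
    rw [this]
    exact hli.comp _ Subtype.val_injective
  let GA := Submodule.span (ZMod 2) (Set.range f)
  let GB := G.map rb
  have hGAfin : Module.finrank (ZMod 2) GA = T := by
    rw [finrank_span_eq_card hfli]; simpa using hI
  have hGAG : ∀ a ∈ GA, ea a ∈ G := by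
    intro a ha
    have : GA ≤ G.comap ea := by
      rw [Submodule.span_le]
      rintro _ ⟨i, rfl⟩
      show ea (ra (g i)) ∈ G
      rw [hea i i.2]; exact hgG i
    exact this ha
  have hGAst : IsStabilizer GA := by
    intro u hu v hv
    have := hG _ (hGAG u hu) _ (hGAG v hv)
    rw [dcg_sympl p, sa, sa] at this
    simpa [dcg_zero] using this
  have hlag : ∀ v, inDual GA v → v ∈ GA :=
    fun v hv => dcg_lagrangian GA hGAst (by rw [hGAfin, ← hsupp]; simp [p]) v hv
  have hdualA : ∀ v, inDual G v → ra v ∈ GA := by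
    intro v hv
    apply hlag
    intro a ha
    have := hv _ (hGAG a ha)
    rw [dcg_sympl p, sa] at this
    simp only [dcg_zero, add_zero] at this
    exact this
  have hGdual : ∀ v ∈ G, inDual G v := fun v hv u hu => hG v hv u hu
  have hGBG : ∀ b ∈ GB, eb b ∈ G := by
    rintro _ ⟨v, hv, rfl⟩
    have h1 := hGAG _ (hdualA v (hGdual v hv))
    have h2 := G.sub_mem hv h1
    have h3 : v - ea (ra v) = eb (rb v) := by
      rw [sub_eq_iff_eq_add']; exact hab v
    rwa [h3] at h2
  have htens : G = tensorAlong p GA GB := by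
    ext v
    constructor
    · intro hv
      exact ⟨hdualA v (hGdual v hv), ⟨v, hv, rfl⟩⟩
    · rintro ⟨h1, h2⟩
      rw [hab v]
      exact G.add_mem (hGAG _ h1) (hGBG _ h2)
  have hGBst : IsStabilizer GB := by
    intro u hu v hv
    have := hG _ (hGBG u hu) _ (hGBG v hv)
    rw [dcg_sympl p, sb, sb] at this
    simpa [dcg_zero] using this
  have hra_wt : ∀ v, wt v = wt (ra v) + wt (rb v) := fun v => dcg_wt p v
  refine ⟨GA, GB, htens, hGAst, hGAfin, ?_, ?_, hGBst, ?_, ?_, ?_⟩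
  · have : {v | inDual GA v ∧ v ∉ GA} = ∅ := by
      ext v
      simp only [Set.mem_ofPred_eq, Set.mem_empty_iff_false, iff_false, not_and, not_not]
      exact hlag v
    rw [distG, this]; simp
  · refine dcg_Wgt (Set.range f) w ?_ GA rfl
    rintro _ ⟨i, rfl⟩
    have := hra_wt (g i)
    have := hw i
    show wt (ra (g i)) ≤ w
    omega
  · have h1 : Module.finrank (ZMod 2) G = Module.finrank (ZMod 2) (GA.prod GB) := by
      have e : G = (GA.prod GB).comap (splitEquiv p).toLinearMap := htens
      have e2 : G.map (splitEquiv p).toLinearMap = GA.prod GB := by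
        conv_lhs => rw [e]
        exact Submodule.map_comap_eq_of_surjective (splitEquiv p).surjective _
      rw [← e2]
      exact (LinearEquiv.finrank_map_eq (splitEquiv p) G).symm
    have h2 : Module.finrank (ZMod 2) (GA.prod GB) =
        Module.finrank (ZMod 2) GA + Module.finrank (ZMod 2) GB := by
      rw [← Module.finrank_prod]
      exact LinearEquiv.finrank_eq (dcg_prodEquiv GA GB)
    have h3 : n - k = T + Module.finrank (ZMod 2) GB := by
      rw [← hdim, h1, h2, hGAfin]
    clear h1 h2
    generalize hq : Module.finrank (ZMod 2) GB = q at h3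
    omega
  · rw [← hdist]
    apply le_antisymm
    · refine le_sInf ?_
      rintro _ ⟨v, ⟨hv1, hv2⟩, rfl⟩
      refine le_trans (sInf_le ⟨rb v, ⟨?_, ?_⟩, rfl⟩) ?_
      · intro b hb
        have := hv1 _ (hGBG b hb)
        rw [dcg_sympl p, sb] at this
        simp only [dcg_zero, zero_add] at this
        exact this
      · intro h
        apply hv2
        rw [hab v]
        exact G.add_mem (hGAG _ (hdualA v hv1)) (hGBG _ h)
      · have := hra_wt v
        show (wt (rb v) : ℕ∞) ≤ (wt v : ℕ∞)
        exact_mod_cast (by omega : wt (rb v) ≤ wt v)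
    · refine le_sInf ?_
      rintro _ ⟨b, ⟨hb1, hb2⟩, rfl⟩
      refine sInf_le ⟨eb b, ⟨?_, ?_⟩, ?_⟩
      · intro u hu
        rw [dcg_sympl p, sb]
        have := hb1 (rb u) ⟨u, hu, rfl⟩
        simp only [dcg_zero', zero_add]
        exact this
      · intro h
        apply hb2
        refine ⟨eb b, h, ?_⟩
        show (splitEquiv p (eb b)).2 = b
        rw [sb]
      · show (wt (eb b) : ℕ∞) = (wt b : ℕ∞)
        rw [dcg_wt p, sb]
        simp [dcg_wt_zero]
  · refine dcg_Wgt (rb '' Set.range g) w ?_ GB ?_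
    · rintro _ ⟨_, ⟨i, rfl⟩, rfl⟩
      have := hra_wt (g i)
      have := hw i
      omega
    · rw [Submodule.span_image, hspan]

end
end

section
/- Let G ⊆ P_ñ be an indecomposable stabilizer group of dimension m̃ = ñ − k̃ with k̃ ≥ 1 and distance d(G) ≥ 2, such that every nonzero element of G has weight ≥ 3, and let S = {h_1, …, h_{m̃}} be an 𝔽₂-basis of G with wt(h_i) = 3 for all i. Then for every 1 ≤ r ≤ m̃ − 1 and any r distinct elements h_{i_1}, …, h_{i_r} of S, the union of their supports satisfies |supp(h_{i_1}) ∪ … ∪ supp(h_{i_r})| ≥ r + 2. -/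
open scoped Classical

noncomputable section

variable {ι : Type} [Fintype ι]

/-- Cut a Pauli string to a set of qubits. -/
def cutP {n : ℕ} (U : Finset (Fin n)) : Pauli n →ₗ[ZMod 2] Pauli n where
  toFun v := fun i => if i ∈ U then v i else 0
  map_add' u v := by
    funext i
    by_cases hi : i ∈ U <;> simp [hi]
  map_smul' c v := by
    funext i
    by_cases hi : i ∈ U <;> simp [hi]

lemma cutP_apply {n : ℕ} (U : Finset (Fin n)) (v : Pauli n) (i : Fin n) :
    cutP U v i = if i ∈ U then v i else 0 := rfl

lemma decomp_of_split {n m : ℕ} (G : Submodule (ZMod 2) (Pauli n))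
    (h : Fin m → Pauli n) (hspan : Submodule.span (ZMod 2) (Set.range h) = G)
    (U : Finset (Fin n)) (hne : ∃ x, x ∈ U) (hnf : ∃ x, x ∉ U)
    (hs : ∀ i, (∀ x, x ∉ U → h i x = 0) ∨ (∀ x, x ∈ U → h i x = 0)) :
    Decomposable G := by
  have hcut : ∀ g ∈ G, cutP U g ∈ G := by
    have : G ≤ G.comap (cutP U) := by
      conv_lhs => rw [← hspan]
      rw [Submodule.span_le]
      rintro _ ⟨i, rfl⟩
      show cutP U (h i) ∈ G
      rcases hs i with h1 | h1
      · have : cutP U (h i) = h i := by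
          funext x
          rw [cutP_apply]
          split_ifs with hx
          · rfl
          · exact (h1 x hx).symm
        rw [this, ← hspan]
        exact Submodule.subset_span ⟨i, rfl⟩
      · have : cutP U (h i) = 0 := by
          funext x
          rw [cutP_apply]
          split_ifs with hx
          · exact h1 x hx
          · rfl
        rw [this]
        exact G.zero_mem
    exact this
  refine ⟨fun x => x ∈ U, hne, hnf,
    G.map ((LinearMap.fst _ _ _).comp (splitEquiv (fun x => x ∈ U)).toLinearMap),
    G.map ((LinearMap.snd _ _ _).comp (splitEquiv (fun x => x ∈ U)).toLinearMap), ?_⟩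
  apply le_antisymm
  · intro g hg
    exact ⟨⟨g, hg, rfl⟩, ⟨g, hg, rfl⟩⟩
  · rintro v ⟨⟨g, hg, hgv⟩, ⟨g', hg', hgv'⟩⟩
    have e : v = cutP U g + (g' - cutP U g') := by
      funext x
      by_cases hx : x ∈ U
      · have := congrFun hgv ⟨x, hx⟩
        have h2 : g x = v x := this
        simp [cutP_apply, hx, h2]
      · have := congrFun hgv' ⟨x, hx⟩
        have h2 : g' x = v x := this
        simp [cutP_apply, hx, h2]
    rw [e]
    exact G.add_mem (hcut g hg) (G.sub_mem hg' (hcut g' hg'))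

lemma loc_dec : ∀ a b c : ZMod 2 × ZMod 2, a.1 * b.2 + a.2 * b.1 ≠ 0 →
    a.1 * c.2 + a.2 * c.1 = 0 → b.1 * c.2 + b.2 * c.1 = 0 → c = 0 := by
  decide

lemma loc_self_s14 : ∀ a : ZMod 2 × ZMod 2, a.1 * a.2 + a.2 * a.1 = 0 := by
  decide

lemma sympl_at {n : ℕ} (u v : Pauli n) (q : Fin n)
    (hq : ∀ x, x ≠ q → u x = 0 ∨ v x = 0) :
    sympl u v = (u q).1 * (v q).2 + (u q).2 * (v q).1 := by
  unfold sympl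
  apply Finset.sum_eq_single q
  · intro x _ hx
    rcases hq x hx with h1 | h1 <;> simp [h1]
  · intro h1
    exact absurd (Finset.mem_univ _) h1

lemma exists_anti {n m : ℕ} (G : Submodule (ZMod 2) (Pauli n)) (hd : 2 ≤ distG G)
    (hmin : ∀ g ∈ G, g ≠ 0 → 3 ≤ wt g)
    (h : Fin m → Pauli n) (hspan : Submodule.span (ZMod 2) (Set.range h) = G)
    (v : Pauli n) (hv : wt v = 1) : ∃ i, sympl v (h i) ≠ 0 := by
  by_contra hcon
  push Not at hcon
  have hdual : inDual G v := by
    intro g hg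
    rw [← hspan] at hg
    induction hg using Submodule.span_induction with
    | mem x hx =>
      obtain ⟨i, rfl⟩ := hx
      exact hcon i
    | zero => simp [sympl]
    | add x y _ _ hx hy =>
      have : sympl v (x + y) = sympl v x + sympl v y := by
        unfold sympl
        rw [← Finset.sum_add_distrib]
        refine Finset.sum_congr rfl fun i _ => ?_
        simp only [Pi.add_apply, Prod.fst_add, Prod.snd_add]
        ring
      rw [this, hx, hy, add_zero]
    | smul c x _ hx =>
      have : sympl v (c • x) = c * sympl v x := by
        unfold sympl
        rw [Finset.mul_sum]
        refine Finset.sum_congr rfl fun i _ => ?_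
        simp only [Pi.smul_apply, Prod.smul_fst, Prod.smul_snd, smul_eq_mul]
        ring
      rw [this, hx, mul_zero]
  have hvG : v ∉ G := by
    intro hvG
    have h0 : v ≠ 0 := by
      rintro rfl
      simp [wt] at hv
    have := hmin v hvG h0
    omega
  have hle : distG G ≤ (wt v : ℕ∞) := sInf_le ⟨v, ⟨hdual, hvG⟩, rfl⟩
  have := hd.trans hle
  rw [hv] at this
  norm_num at this

lemma core_s14 {n m : ℕ} (hmn : m + 1 ≤ n)
    (G : Submodule (ZMod 2) (Pauli n)) (hG : IsStabilizer G) (hd : 2 ≤ distG G)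
    (hindec : ¬ Decomposable G)
    (hmin : ∀ g ∈ G, g ≠ 0 → 3 ≤ wt g)
    (h : Fin m → Pauli n) (hspan : Submodule.span (ZMod 2) (Set.range h) = G)
    (h3 : ∀ i, wt (h i) = 3) (t : ℕ) :
    ∀ I : Finset (Fin m), I.Nonempty → I.card + t + 1 = m →
      I.card + 2 ≤ (I.biUnion fun i => suppF (h i)).card := by
  have hmem : ∀ i, h i ∈ G := fun i => by
    rw [← hspan]
    exact Submodule.subset_span ⟨i, rfl⟩
  have hcomm : ∀ i j, sympl (h i) (h j) = 0 := fun i j => hG _ (hmem i) _ (hmem j)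
  induction t with
  | zero =>
    intro I hI hc
    by_contra hlt
    set U := I.biUnion fun i => suppF (h i) with hU
    have hsub : ∀ i ∈ I, ∀ x, x ∉ U → h i x = 0 := by
      intro i hi x hx
      by_contra hne
      exact hx (Finset.mem_biUnion.2 ⟨i, hi, by simp [suppF, hne]⟩)
    have hUne : ∃ x, x ∈ U := by
      obtain ⟨i, hi⟩ := hI
      by_contra hcon
      push Not at hcon
      have h0 : h i = 0 := funext fun x => hsub i hi x (hcon x)
      have := h3 i
      rw [h0] at this
      simp [wt] at this
    have hUnf : ∃ x, x ∉ U := by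
      by_contra hcon
      push Not at hcon
      have : U = Finset.univ := Finset.eq_univ_iff_forall.2 hcon
      rw [this, Finset.card_univ, Fintype.card_fin] at hlt
      omega
    have hcc : Iᶜ.card = 1 := by
      rw [Finset.card_compl, Fintype.card_fin]
      omega
    obtain ⟨j, hj⟩ := Finset.card_eq_one.1 hcc
    have hcase : ∀ i, i ∈ I ∨ i = j := by
      intro i
      by_cases hi : i ∈ I
      · exact Or.inl hi
      · right
        have : i ∈ Iᶜ := Finset.mem_compl.2 hi
        rw [hj] at this
        exact Finset.mem_singleton.1 this
    have hv : wt (cutP U (h j)) ≠ 1 := by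
      intro h1
      obtain ⟨i, hi⟩ := exists_anti G hd hmin h hspan _ h1
      apply hi
      rcases hcase i with hiI | rfl
      · rw [← hcomm j i]
        unfold sympl
        refine Finset.sum_congr rfl fun x _ => ?_
        by_cases hx : x ∈ U
        · simp [cutP_apply, hx]
        · simp [hsub i hiI x hx]
      · unfold sympl
        refine Finset.sum_eq_zero fun x _ => ?_
        by_cases hx : x ∈ U
        · simpa [cutP_apply, hx] using loc_self_s14 (h i x)
        · simp [cutP_apply, hx]
    have hv' : wt (cutP Uᶜ (h j)) ≠ 1 := by
      intro h1
      obtain ⟨i, hi⟩ := exists_anti G hd hmin h hspan _ h1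
      apply hi
      unfold sympl
      refine Finset.sum_eq_zero fun x _ => ?_
      rcases hcase i with hiI | rfl
      · by_cases hx : x ∈ U
        · simp [cutP_apply, hx]
        · simp [hsub i hiI x hx]
      · by_cases hx : x ∈ U
        · simp [cutP_apply, hx]
        · simpa [cutP_apply, hx] using loc_self_s14 (h i x)
    have hsum : wt (cutP U (h j)) + wt (cutP Uᶜ (h j)) = 3 := by
      rw [← h3 j]
      unfold wt
      rw [← Finset.card_filter_add_card_filter_not
        (s := Finset.univ.filter fun i => h j i ≠ 0) (fun x => x ∈ U),
        Finset.filter_filter, Finset.filter_filter]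
      congr 2
      · ext x
        by_cases hx : x ∈ U <;> simp [cutP_apply, hx]
      · ext x
        by_cases hx : x ∈ U <;> simp [cutP_apply, hx]
    have hz : wt (cutP U (h j)) = 0 ∨ wt (cutP Uᶜ (h j)) = 0 := by omega
    apply hindec
    refine decomp_of_split G h hspan U hUne hUnf ?_
    intro i
    rcases hcase i with hiI | rfl
    · exact Or.inl (hsub i hiI)
    · rcases hz with hz | hz
      · right
        intro x hx
        have := (Finset.filter_eq_empty_iff.1 (Finset.card_eq_zero.1 hz)) (Finset.mem_univ x)
        simpa [cutP_apply, hx] using this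
      · left
        intro x hx
        have := (Finset.filter_eq_empty_iff.1 (Finset.card_eq_zero.1 hz)) (Finset.mem_univ x)
        simpa [cutP_apply, hx] using this
  | succ t ih =>
    intro I hI hc
    by_contra hlt
    set U := I.biUnion fun i => suppF (h i) with hU
    have hsub : ∀ i ∈ I, ∀ x, x ∉ U → h i x = 0 := by
      intro i hi x hx
      by_contra hne
      exact hx (Finset.mem_biUnion.2 ⟨i, hi, by simp [suppF, hne]⟩)
    have hUne : ∃ x, x ∈ U := by
      obtain ⟨i, hi⟩ := hI
      by_contra hcon
      push Not at hcon
      have h0 : h i = 0 := funext fun x => hsub i hi x (hcon x)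
      have := h3 i
      rw [h0] at this
      simp [wt] at this
    have hUnf : ∃ x, x ∉ U := by
      by_contra hcon
      push Not at hcon
      have : U = Finset.univ := Finset.eq_univ_iff_forall.2 hcon
      rw [this, Finset.card_univ, Fintype.card_fin] at hlt
      omega
    have hone : ∀ j, j ∉ I → (suppF (h j) ∩ U).card ≤ 1 := by
      intro j hj
      by_contra hgt
      have h1 := ih (insert j I) (Finset.insert_nonempty _ _)
        (by rw [Finset.card_insert_of_notMem hj]; omega)
      rw [Finset.card_insert_of_notMem hj, Finset.biUnion_insert, ← hU] at h1
      have h2 := Finset.card_union_add_card_inter (suppF (h j)) U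
      have h4 : (suppF (h j)).card = 3 := h3 j
      omega
    have huniq : ∀ j, j ∉ I → ∀ x ∈ U, ∀ y ∈ U, h j x ≠ 0 → h j y ≠ 0 → x = y := by
      intro j hj x hx y hy hjx hjy
      exact Finset.card_le_one.1 (hone j hj) x (by simp [suppF, hx, hjx]) y
        (by simp [suppF, hy, hjy])
    have hloc : ∀ j, j ∉ I → ∀ q ∈ U, h j q ≠ 0 → ∀ i ∈ I,
        (h j q).1 * (h i q).2 + (h j q).2 * (h i q).1 = 0 := by
      intro j hj q hq hjq i hi
      rw [← hcomm j i]
      symm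
      apply sympl_at
      intro x hx
      by_cases hxU : x ∈ U
      · left
        by_contra hne
        exact hx (huniq j hj x hxU q hq hne hjq)
      · right
        exact hsub i hi x hxU
    by_cases htouch : ∃ j, j ∉ I ∧ ∃ q ∈ U, h j q ≠ 0
    · obtain ⟨j, hj, q, hq, hjq⟩ := htouch
      have hw : wt (Pi.single q (h j q) : Pauli n) = 1 := by
        unfold wt
        rw [Finset.card_eq_one]
        refine ⟨q, ?_⟩
        ext x
        by_cases hx : x = q
        · subst hx
          simp [hjq]
        · simp [hx]
      obtain ⟨l, hl⟩ := exists_anti G hd hmin h hspan _ hw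
      rw [sympl_at _ _ q (fun x hx => Or.inl (by simp [hx]))] at hl
      simp only [Pi.single_eq_same] at hl
      have hlI : l ∉ I := fun hlI => hl (hloc j hj q hq hjq l hlI)
      have hlq : h l q ≠ 0 := by
        intro h0
        apply hl
        simp [h0]
      obtain ⟨i, hi, hiq⟩ := Finset.mem_biUnion.1 hq
      have hiq' : h i q ≠ 0 := by simpa [suppF] using hiq
      exact hiq' (loc_dec _ _ _ hl (hloc j hj q hq hjq i hi) (hloc l hlI q hq hlq i hi))
    · push Not at htouch
      apply hindec
      refine decomp_of_split G h hspan U hUne hUnf ?_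
      intro i
      by_cases hi : i ∈ I
      · exact Or.inl (hsub i hi)
      · exact Or.inr (htouch i hi)

/-- support expansion: in an indecomposable stabilizer code with
`k ≥ 1`, distance `≥ 2`, all nonzero stabilizers of weight `≥ 3`, and a weight-3 basis,
any `r ≤ (n-k) - 1` distinct generators are supported on at least `r + 2` qubits. -/
theorem support_expansion (n k : ℕ) (hk : 1 ≤ k)
    (G : Submodule (ZMod 2) (Pauli n)) (hG : IsStabilizer G)
    (hdim : Module.finrank (ZMod 2) ↥G = n - k) (hd : 2 ≤ distG G)
    (hindec : ¬ Decomposable G)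
    (hmin : ∀ g ∈ G, g ≠ 0 → 3 ≤ wt g)
    (h : Fin (n - k) → Pauli n) (hbasis : IsBasisFam G h)
    (h3 : ∀ i, wt (h i) = 3) :
    ∀ (r : ℕ) (I : Finset (Fin (n - k))), 1 ≤ r → r ≤ n - k - 1 → I.card = r →
      r + 2 ≤ (I.biUnion fun i => suppF (h i)).card := by
  intro r I hr hrm hc
  have hI : I.Nonempty := Finset.card_pos.1 (by omega)
  have := core_s14 (by omega) G hG hd hindec hmin h hbasis.2 h3 (n - k - 1 - r) I hI (by omega)
  omega

end
end
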